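/- arXiv:2109.04317 — 4 statements merged into one kernel-verified Lean document; each statement's English description precedes it below -/
import Mathlib

section
/- For every ε ∈ (0, 0.25) there is an absolute constant C such that every finite simple graph G on n vertices with minimum degree δ ≥ 1 satisfying δ^(1+ε) ≥ n satisfies s(G) ≤ n/δ + C. -/
noncomputable section

namespace FL

/-- The weighted degree of a vertex `v` under an edge weighting `f`. -/
def weightedDeg {V : Type*} [Fintype V] (G : SimpleGraph V) [DecidableRel G.Adj]
    (f : Sym2 V → ℕ) (v : V) : ℕ :=
  ∑ u ∈ G.neighborFinset v, f s(u, v)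

/-- `f` is a `k`-irregular assignment for `G`: it takes values in `{1, …, k}` on the
edges of `G` and the weighted degrees of the vertices are pairwise distinct. -/
def IsIrregularAssignment {V : Type*} [Fintype V] (G : SimpleGraph V) [DecidableRel G.Adj]
    (k : ℕ) (f : Sym2 V → ℕ) : Prop :=
  (∀ e ∈ G.edgeSet, f e ∈ Finset.Icc 1 k) ∧ Function.Injective (weightedDeg G f)

/-- The irregularity strength `s(G)`: the least positive integer `k` for which a
`k`-irregular assignment exists (`⊤ = ∞` if none exists). -/
def irregularityStrength {V : Type*} [Fintype V] (G : SimpleGraph V)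
    [DecidableRel G.Adj] : ℕ∞ :=
  ⨅ (k : ℕ) (_ : 1 ≤ k) (_ : ∃ f : Sym2 V → ℕ, IsIrregularAssignment G k f), (k : ℕ∞)

/-- Quadratic upper bound for the exponential near `0`. -/
lemma exp_quad {x : ℝ} (hx : |x| ≤ 1) : Real.exp x ≤ 1 + x + x ^ 2 := by
  have := Real.abs_exp_sub_one_sub_id_le hx
  have := (abs_le.1 this).2
  linarith

/-- A uniform Hoeffding bound on a finite product space, with a union bound. -/
lemma exists_good {V A ι : Type*} [Fintype V] [DecidableEq V] [Fintype A] [Nonempty A]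
    [Fintype ι] (Y : ι → V → A → ℝ) (μ : ι → V → ℝ)
    (hY0 : ∀ i v a, 0 ≤ Y i v a) (hY1 : ∀ i v a, Y i v a ≤ 1)
    (hμ : ∀ i v, ∑ a, Y i v a ≤ Fintype.card A * μ i v)
    (T : ι → Finset V) (N : ι → ℝ) (hN : ∀ i, ((T i).card : ℝ) ≤ N i)
    (hNpos : ∀ i, 0 < N i) (L : ℝ) (hL0 : 0 ≤ L) (hL : ∀ i, L ≤ √(N i))
    (hcard : (Fintype.card ι : ℝ) * Real.exp (-(L ^ 2 / 4)) < 1) :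
    ∃ ω : V → A, ∀ i, ∑ v ∈ T i, Y i v (ω v) ≤ ∑ v ∈ T i, μ i v + L * √(N i) := by
  by_contra hcon
  push Not at hcon
  have hA : (0 : ℝ) < Fintype.card A := by exact_mod_cast Fintype.card_pos
  set av : ι → V → ℝ := fun i v => (∑ a, Y i v a) / Fintype.card A with hav
  have hav_le : ∀ i v, av i v ≤ μ i v := by
    intro i v
    rw [hav]; simp only
    rw [div_le_iff₀ hA, mul_comm]; exact hμ i v
  have hav0 : ∀ i v, 0 ≤ av i v := fun i v =>
    div_nonneg (Finset.sum_nonneg fun a _ => hY0 i v a) hA.le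
  have hav1 : ∀ i v, av i v ≤ 1 := by
    intro i v
    rw [hav]; simp only
    rw [div_le_iff₀ hA, one_mul]
    calc ∑ a, Y i v a ≤ ∑ a : A, (1 : ℝ) := Finset.sum_le_sum fun a _ => hY1 i v a
      _ = _ := by simp
  set lam : ι → ℝ := fun i => L / (2 * √(N i)) with hlam
  have hs : ∀ i, 0 < √(N i) := fun i => Real.sqrt_pos.2 (hNpos i)
  have hlam0 : ∀ i, 0 ≤ lam i := fun i => div_nonneg hL0 (by have := hs i; positivity)
  have hlam1 : ∀ i, lam i ≤ 1 := by
    intro i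
    rw [hlam]; simp only
    rw [div_le_one (by have := hs i; positivity)]
    have := hs i; have := hL i; linarith
  -- moment bound
  have hmom : ∀ i, ∑ ω : V → A, Real.exp (lam i * ∑ v ∈ T i, (Y i v (ω v) - av i v))
      ≤ (Fintype.card A : ℝ) ^ (Fintype.card V) * Real.exp (L ^ 2 / 4) := by
    intro i
    have h1 : ∀ ω : V → A, Real.exp (lam i * ∑ v ∈ T i, (Y i v (ω v) - av i v))
        = ∏ v, (if v ∈ T i then Real.exp (lam i * (Y i v (ω v) - av i v)) else 1) := by
      intro ω
      rw [Finset.mul_sum, Real.exp_sum, Finset.prod_ite_mem]; simp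
    have h2 : ∑ ω : V → A, ∏ v, (if v ∈ T i then Real.exp (lam i * (Y i v (ω v) - av i v)) else 1)
        = ∏ v, ∑ a : A, (if v ∈ T i then Real.exp (lam i * (Y i v a - av i v)) else 1) := by
      rw [Finset.prod_univ_sum]; simp
    rw [Finset.sum_congr rfl (fun ω _ => h1 ω), h2]
    have h3 : ∀ v, ∑ a : A, (if v ∈ T i then Real.exp (lam i * (Y i v a - av i v)) else 1)
        ≤ Fintype.card A * (if v ∈ T i then Real.exp (lam i ^ 2) else 1) := by
      intro v
      split_ifs with hv
      · have h4 : ∀ a : A, Real.exp (lam i * (Y i v a - av i v))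
            ≤ 1 + lam i * (Y i v a - av i v) + lam i ^ 2 := by
          intro a
          have hab : |Y i v a - av i v| ≤ 1 := by
            rw [abs_le]; constructor <;> linarith [hY0 i v a, hY1 i v a, hav0 i v, hav1 i v]
          have hab2 : |lam i * (Y i v a - av i v)| ≤ 1 := by
            rw [abs_mul, abs_of_nonneg (hlam0 i)]
            calc _ ≤ 1 * 1 := mul_le_mul (hlam1 i) hab (abs_nonneg _) zero_le_one
              _ = 1 := by norm_num
          have := exp_quad hab2
          have h5 : (Y i v a - av i v) ^ 2 ≤ 1 := by
            rw [← sq_abs]; exact pow_le_one₀ (abs_nonneg _) hab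
          have h6 : (lam i * (Y i v a - av i v)) ^ 2 ≤ lam i ^ 2 := by
            rw [mul_pow]; nlinarith [sq_nonneg (lam i)]
          linarith
        calc _ ≤ ∑ a : A, (1 + lam i * (Y i v a - av i v) + lam i ^ 2) :=
              Finset.sum_le_sum fun a _ => h4 a
          _ = Fintype.card A * (1 + lam i ^ 2) := by
              simp only [Finset.sum_add_distrib, ← Finset.mul_sum, Finset.sum_sub_distrib,
                Finset.sum_const, Finset.card_univ, nsmul_eq_mul]
              have : (Fintype.card A : ℝ) * av i v = ∑ a, Y i v a := by
                rw [hav]; simp only; field_simp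
              rw [this]; ring
          _ ≤ _ := by
              apply mul_le_mul_of_nonneg_left _ hA.le
              have := Real.add_one_le_exp (lam i ^ 2); linarith
      · simp
    calc _ ≤ ∏ v : V, (Fintype.card A : ℝ) * (if v ∈ T i then Real.exp (lam i ^ 2) else 1) := by
          apply Finset.prod_le_prod
          · intro v _
            apply Finset.sum_nonneg; intro a _; split_ifs <;> positivity
          · intro v _; exact h3 v
      _ = (Fintype.card A : ℝ) ^ (Fintype.card V) * Real.exp (lam i ^ 2) ^ (T i).card := by
          rw [Finset.prod_mul_distrib, Finset.prod_const, Finset.card_univ, Finset.prod_ite_mem]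
          simp
      _ ≤ _ := by
          apply mul_le_mul_of_nonneg_left _ (by positivity)
          rw [← Real.exp_nat_mul]
          apply Real.exp_le_exp.2
          have : lam i ^ 2 = L ^ 2 / (4 * N i) := by
            rw [hlam]; simp only
            rw [div_pow, mul_pow, Real.sq_sqrt (hNpos i).le]; norm_num
          rw [this]
          calc ((T i).card : ℝ) * (L ^ 2 / (4 * N i)) ≤ N i * (L ^ 2 / (4 * N i)) := by
                apply mul_le_mul_of_nonneg_right (hN i)
                have := hNpos i; positivity
            _ = L ^ 2 / 4 := by have := (hNpos i).ne'; field_simp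
  have hlow : ∀ ω : V → A, (1 : ℝ) ≤ ∑ i, Real.exp (-(L ^ 2 / 2)) *
      Real.exp (lam i * ∑ v ∈ T i, (Y i v (ω v) - av i v)) := by
    intro ω
    obtain ⟨i, hi⟩ := hcon ω
    have h7 : (1 : ℝ) ≤ Real.exp (-(L ^ 2 / 2)) *
        Real.exp (lam i * ∑ v ∈ T i, (Y i v (ω v) - av i v)) := by
      rw [← Real.exp_add]
      apply Real.one_le_exp
      have h8 : L * √(N i) ≤ ∑ v ∈ T i, (Y i v (ω v) - av i v) := by
        rw [Finset.sum_sub_distrib]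
        have : ∑ v ∈ T i, av i v ≤ ∑ v ∈ T i, μ i v := Finset.sum_le_sum fun v _ => hav_le i v
        linarith
      have h9 := mul_le_mul_of_nonneg_left h8 (hlam0 i)
      have h10 : lam i * (L * √(N i)) = L ^ 2 / 2 := by
        rw [hlam]; simp only
        have := (hs i).ne'; field_simp
      linarith
    refine h7.trans (Finset.single_le_sum (f := fun i => Real.exp (-(L ^ 2 / 2)) *
      Real.exp (lam i * ∑ v ∈ T i, (Y i v (ω v) - av i v))) (fun i _ => by positivity)
      (Finset.mem_univ i))
  have hsum := Finset.sum_le_sum (s := Finset.univ) (fun ω (_ : ω ∈ (Finset.univ : Finset (V → A))) => hlow ω)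
  rw [Finset.sum_comm] at hsum
  have hup : ∑ i, ∑ ω : V → A, Real.exp (-(L ^ 2 / 2)) *
      Real.exp (lam i * ∑ v ∈ T i, (Y i v (ω v) - av i v))
      ≤ ∑ i : ι, Real.exp (-(L ^ 2 / 4)) * (Fintype.card A : ℝ) ^ (Fintype.card V) := by
    apply Finset.sum_le_sum
    intro i _
    rw [← Finset.mul_sum]
    calc _ ≤ Real.exp (-(L ^ 2 / 2)) *
        ((Fintype.card A : ℝ) ^ (Fintype.card V) * Real.exp (L ^ 2 / 4)) :=
          mul_le_mul_of_nonneg_left (hmom i) (Real.exp_pos _).le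
      _ = (Real.exp (-(L ^ 2 / 2)) * Real.exp (L ^ 2 / 4)) *
        (Fintype.card A : ℝ) ^ (Fintype.card V) := by ring
      _ = _ := by rw [← Real.exp_add]; congr 2; ring
  have htot := hsum.trans hup
  simp only [Finset.sum_const, Finset.card_univ, nsmul_eq_mul, Fintype.card_fun, mul_one] at htot
  push_cast at htot
  have hpos : (0 : ℝ) < (Fintype.card A : ℝ) ^ (Fintype.card V) := by positivity
  nlinarith

/-- First-fit placement of the points `w v` into the slots `P`. -/
lemma first_fit_aux {V : Type*} [DecidableEq V] (w : V → ℕ) (P : ℕ → Prop) [DecidablePred P]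
    (hP : ∀ k, ∃ z, k ≤ z ∧ P z) (A : Finset V) :
    ∃ t : V → ℕ, (∀ v ∈ A, P (t v) ∧ w v ≤ t v) ∧ Set.InjOn t A ∧
      ∀ v ∈ A, ∃ u ∈ A, w u ≤ w v ∧
        ((Finset.Icc (w u) (t v)).filter P).card ≤
          (A.filter (fun x => w u ≤ w x ∧ w x ≤ w v)).card := by
  induction A using Finset.induction_on_max_value w with
  | empty => exact ⟨fun _ => 0, by simp, by simp, by simp⟩
  | insert a A ha hmax ih =>
    obtain ⟨t, ht1, ht2, ht3⟩ := ih
    -- next slot above everything used and at least `w a`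
    set k := max (w a) (A.sup (fun v => t v + 1)) with hk
    set z := Nat.find (hP k) with hz
    have hz1 : k ≤ z := (Nat.find_spec (hP k)).1
    have hz2 : P z := (Nat.find_spec (hP k)).2
    have hz3 : ∀ x, k ≤ x → P x → z ≤ x := fun x h1 h2 => Nat.find_min' (hP k) ⟨h1, h2⟩
    have hlt : ∀ v ∈ A, t v < z := by
      intro v hv
      have : t v + 1 ≤ A.sup (fun v => t v + 1) := Finset.le_sup (f := fun v => t v + 1) hv
      have h2 := le_max_right (w a) (A.sup (fun v => t v + 1))
      omega
    have hne : ∀ v ∈ A, v ≠ a := fun v hv h => ha (h ▸ hv)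
    have hupd : ∀ v ∈ A, Function.update t a z v = t v := fun v hv => by
      simp [Function.update_of_ne (hne v hv)]
    have hwz : w a ≤ z := le_trans (le_max_left _ _) hz1
    refine ⟨Function.update t a z, ?_, ?_, ?_⟩
    · intro v hv
      rcases Finset.mem_insert.1 hv with rfl | hv
      · simp [hz2, hwz]
      · rw [hupd v hv]; exact ht1 v hv
    · intro u hu v hv huv
      rcases Finset.mem_insert.1 (Finset.mem_coe.1 hu) with rfl | hu'
      · rcases Finset.mem_insert.1 (Finset.mem_coe.1 hv) with rfl | hv
        · rfl
        · rw [hupd v hv] at huv; simp at huv; have := hlt v hv; omega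
      · rcases Finset.mem_insert.1 (Finset.mem_coe.1 hv) with rfl | hv
        · rw [hupd u hu'] at huv; simp at huv; have := hlt u hu'; omega
        · rw [hupd v hv, hupd u hu'] at huv; exact ht2 hu' hv huv
    · intro v hv
      rcases Finset.mem_insert.1 hv with rfl | hv
      · rw [Function.update_self]
        by_cases hc : A.sup (fun v => t v + 1) ≤ w v
        · have hkw : k = w v := max_eq_left hc
          refine ⟨v, Finset.mem_insert_self _ _, le_rfl, ?_⟩
          have h1 : ((Finset.Icc (w v) z).filter P) ⊆ {z} := by
            intro x hx
            simp only [Finset.mem_filter, Finset.mem_Icc] at hx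
            have := hz3 x (by omega) hx.2
            simp; omega
          refine (Finset.card_le_card h1).trans ?_
          rw [Finset.card_singleton, Nat.succ_le_iff, Finset.card_pos]
          exact ⟨v, by simp⟩
        · push Not at hc
          have hAne : A.Nonempty := by
            rw [Finset.nonempty_iff_ne_empty]; rintro rfl; simp at hc
          obtain ⟨v0, hv0, hv0e⟩ := Finset.exists_mem_eq_sup A hAne (fun v => t v + 1)
          have hkv : k = t v0 + 1 := by rw [hk, max_eq_right hc.le, hv0e]
          obtain ⟨u, hu, huw, hcard⟩ := ht3 v0 hv0
          have hm0 := hmax v0 hv0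
          refine ⟨u, Finset.mem_insert_of_mem hu, hmax u hu, ?_⟩
          have h1 : ((Finset.Icc (w u) z).filter P) ⊆
              insert z ((Finset.Icc (w u) (t v0)).filter P) := by
            intro x hx
            simp only [Finset.mem_filter, Finset.mem_Icc] at hx
            simp only [Finset.mem_insert, Finset.mem_filter, Finset.mem_Icc]
            by_cases hx0 : x ≤ t v0
            · exact Or.inr ⟨⟨hx.1.1, hx0⟩, hx.2⟩
            · have := hz3 x (by omega) hx.2
              left; omega
          have h2 : insert v (A.filter (fun x => w u ≤ w x ∧ w x ≤ w v0)) ⊆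
              (insert v A).filter (fun x => w u ≤ w x ∧ w x ≤ w v) := by
            intro x hx
            rcases Finset.mem_insert.1 hx with rfl | hx
            · simp [hmax u hu]
            · simp only [Finset.mem_filter, Finset.mem_insert] at hx ⊢
              exact ⟨Or.inr hx.1, hx.2.1, hmax x hx.1⟩
          have h3 := Finset.card_le_card h1
          have h4 := Finset.card_le_card h2
          rw [Finset.card_insert_of_notMem (by simp [ha])] at h4
          have h5 := Finset.card_insert_le z ((Finset.Icc (w u) (t v0)).filter P)
          omega
      · obtain ⟨u, hu, huw, hcard⟩ := ht3 v hv
        refine ⟨u, Finset.mem_insert_of_mem hu, huw, ?_⟩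
        rw [hupd v hv]
        exact hcard.trans (Finset.card_le_card (Finset.filter_subset_filter _ (Finset.subset_insert _ _)))

/-- First-fit with bounded displacement. -/
lemma first_fit {V : Type*} [DecidableEq V] (w : V → ℕ) (P : ℕ → Prop) [DecidablePred P]
    (hP : ∀ k, ∃ z, k ≤ z ∧ P z) (A : Finset V) (D : ℕ)
    (hD : ∀ u ∈ A, ∀ v ∈ A, w u ≤ w v →
      (A.filter (fun x => w u ≤ w x ∧ w x ≤ w v)).card ≤
        ((Finset.Icc (w u) (w v + D)).filter P).card) :
    ∃ t : V → ℕ, (∀ v ∈ A, P (t v) ∧ w v ≤ t v ∧ t v ≤ w v + D) ∧ Set.InjOn t A := by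
  obtain ⟨t, h1, h2, h3⟩ := first_fit_aux w P hP A
  refine ⟨t, fun v hv => ⟨(h1 v hv).1, (h1 v hv).2, ?_⟩, h2⟩
  by_contra hlt
  push Not at hlt
  obtain ⟨u, hu, huv, hc⟩ := h3 v hv
  have hss : ((Finset.Icc (w u) (w v + D)).filter P) ⊂ ((Finset.Icc (w u) (t v)).filter P) := by
    refine Finset.ssubset_iff_subset_ne.2 ⟨?_, ?_⟩
    · exact Finset.filter_subset_filter _ (Finset.Icc_subset_Icc le_rfl hlt.le)
    · intro he
      have : t v ∈ ((Finset.Icc (w u) (t v)).filter P) := by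
        simp only [Finset.mem_filter, Finset.mem_Icc]
        exact ⟨⟨by omega, le_rfl⟩, (h1 v hv).1⟩
      rw [← he] at this
      simp only [Finset.mem_filter, Finset.mem_Icc] at this
      omega
  have := Finset.card_lt_card hss
  have := hD u hu v hv huv
  omega

/-- Finding a free slot in a window. -/
lemma find_slot (g m h g' R : ℕ) (hg : 0 < g) (hm : 0 < m) (hg' : g' ≤ g) (hR : m * R ≤ h + 1)
    (τ : ℤ) (hτ0 : 0 ≤ τ) (hτ : τ < m) (x : ℤ) (F : Finset ℤ) (hF : F.card < g' * R) :
    ∃ a j : ℕ, a < g' ∧ j ≤ h ∧ (x + a + g * j) / g % m = τ ∧ (x + a + g * j) ∉ F := by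
  classical
  have hgz : (0 : ℤ) < g := by exact_mod_cast hg
  have hmz : (0 : ℤ) < m := by exact_mod_cast hm
  set j0 : ℕ → ℤ := fun a => (τ - (x + a) / g) % m with hj0
  have hj00 : ∀ a, 0 ≤ j0 a := fun a => Int.emod_nonneg _ hmz.ne'
  have hj01 : ∀ a, j0 a < m := fun a => Int.emod_lt_of_pos _ hmz
  set φ : ℕ × ℕ → ℤ := fun p => x + p.1 + g * (j0 p.1 + m * p.2) with hφ
  have hinj : Set.InjOn φ (Finset.range g' ×ˢ Finset.range R : Finset (ℕ × ℕ)) := by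
    rintro ⟨a, i⟩ hp ⟨b, k⟩ hq hpq
    simp only [Finset.coe_product, Set.mem_prod, Finset.mem_coe, Finset.mem_range] at hp hq
    simp only [hφ] at hpq
    have hab : (a : ℤ) = b := by
      have e1 : (a : ℤ) + g * (j0 a + m * i) = b + g * (j0 b + m * k) := by linarith
      have e2 := congrArg (fun z => z % (g : ℤ)) e1
      simp only [Int.add_mul_emod_self_left] at e2
      rw [Int.emod_eq_of_lt (by omega) (by omega), Int.emod_eq_of_lt (by omega) (by omega)] at e2
      exact e2
    have hab' : a = b := by exact_mod_cast hab
    subst hab'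
    have e3 : (g : ℤ) * (j0 a + m * i) = g * (j0 a + m * k) := by linarith
    have e4 := mul_left_cancel₀ hgz.ne' e3
    have e5 : (m : ℤ) * i = m * k := by linarith
    have e6 := mul_left_cancel₀ hmz.ne' e5
    have : i = k := by exact_mod_cast e6
    rw [this]
  have hcard : F.card < (Finset.image φ (Finset.range g' ×ˢ Finset.range R)).card := by
    rw [Finset.card_image_of_injOn hinj]; simpa using hF
  obtain ⟨z, hz, hzF⟩ := Finset.exists_mem_notMem_of_card_lt_card hcard
  obtain ⟨⟨a, i⟩, hp, rfl⟩ := Finset.mem_image.1 hz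
  simp only [Finset.mem_product, Finset.mem_range] at hp
  have hjn : ((j0 a + m * i).toNat : ℤ) = j0 a + m * i :=
    Int.toNat_of_nonneg (by have := hj00 a; positivity)
  refine ⟨a, (j0 a + m * i).toNat, hp.1, ?_, ?_, ?_⟩
  · have h1 := hj01 a
    have h2 : (m : ℤ) * (i + 1) ≤ m * R := by
      apply mul_le_mul_of_nonneg_left _ hmz.le
      have := hp.2; omega
    have h3 : (m : ℤ) * R ≤ h + 1 := by exact_mod_cast hR
    have : ((j0 a + m * i).toNat : ℤ) ≤ h := by rw [hjn]; linarith
    exact_mod_cast this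
  · rw [hjn, Int.add_mul_ediv_left _ _ hgz.ne']
    have : (x + a) / (g : ℤ) + (j0 a + m * i) = ((x + a) / g + j0 a) + m * i := by ring
    rw [this, Int.add_mul_emod_self_left, hj0]
    simp only
    rw [Int.add_emod_emod]
    rw [show (x + (a : ℤ)) / g + (τ - (x + a) / g) = τ by ring]
    exact Int.emod_eq_of_lt hτ0 hτ
  · rw [hjn]; exact hzF

/-- State of the sequential algorithm on the small set. -/
structure SState {V : Type*} (Nb : V → Finset V) (b : V → ℤ) (lev : V → ℕ) (g m : ℕ)
    (P : Finset V) (f : V → V → ℤ) (y : V → ℤ) : Prop where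
  symm : ∀ u v, f u v = f v u
  out : ∀ u v, u ∉ P → v ∉ P → f u v = g
  half0 : ∀ u v, u ∈ P → v ∉ P → (g : ℤ) ≤ f u v
  half1 : ∀ u v, u ∈ P → v ∉ P → f u v ≤ 3 * g - 1
  full0 : ∀ u v, u ∈ P → v ∈ P → 0 ≤ f u v
  full1 : ∀ u v, u ∈ P → v ∈ P → f u v ≤ 4 * g - 1
  tot : ∀ u ∈ P, b u + ∑ v ∈ Nb u, f u v = y u ∨ b u + ∑ v ∈ Nb u, f u v = y u + g
  inj : Set.InjOn y P
  nonroot : ∀ u ∈ P, lev u ≠ 0 → y u / g % m = 0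
  root : ∀ u ∈ P, lev u = 0 → y u / g % m = 2

lemma SState.bounds {V : Type*} {Nb : V → Finset V} {b : V → ℤ} {lev : V → ℕ} {g m : ℕ}
    {P : Finset V} {f : V → V → ℤ} {y : V → ℤ} (hg : 0 < g) (h : SState Nb b lev g m P f y)
    (u v : V) : 0 ≤ f u v ∧ f u v ≤ 4 * g - 1 := by
  have hgz : (0 : ℤ) < g := by exact_mod_cast hg
  by_cases hu : u ∈ P <;> by_cases hv : v ∈ P
  · exact ⟨h.full0 u v hu hv, h.full1 u v hu hv⟩
  · have := h.half0 u v hu hv; have := h.half1 u v hu hv; constructor <;> linarith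
  · rw [h.symm]
    have := h.half0 v u hv hu; have := h.half1 v u hv hu; constructor <;> linarith
  · rw [h.out u v hu hv]; constructor <;> linarith

lemma SState.tot_bounds {V : Type*} {Nb : V → Finset V} {b : V → ℤ} {lev : V → ℕ} {g m : ℕ}
    {P : Finset V} {f : V → V → ℤ} {y : V → ℤ} (hg : 0 < g) (h : SState Nb b lev g m P f y)
    (u : V) : 0 ≤ ∑ v ∈ Nb u, f u v ∧ ∑ v ∈ Nb u, f u v ≤ 4 * g * (Nb u).card := by
  constructor
  · exact Finset.sum_nonneg fun v _ => (h.bounds hg u v).1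
  · calc _ ≤ ∑ v ∈ Nb u, (4 * g : ℤ) := Finset.sum_le_sum fun v _ => by
          have := (h.bounds hg u v).2; linarith
      _ = _ := by simp; ring

/-- One step of the algorithm. -/
lemma SState.step {V : Type*} [DecidableEq V] {Nb : V → Finset V} {b : V → ℤ} {lev : V → ℕ}
    {g m : ℕ} {P : Finset V} {f : V → V → ℤ} {y : V → ℤ} (hst : SState Nb b lev g m P f y)
    (S : Finset V) (hPS : P ⊆ S) (s : V) (hs : s ∈ S) (hsP : s ∉ P)
    (hsymm : ∀ u ∈ S, ∀ v ∈ S, (u ∈ Nb v ↔ v ∈ Nb u)) 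
    (hg : 0 < g) (hm : 4 ≤ m) (h R N : ℕ) (hR : m * R ≤ h + 1) (hdeg : h ≤ (Nb s).card)
    (hN : N < g * R) (hroots : (S.filter (fun u => lev u = 0)).card < R)
    (Amax : ℤ) (hb0 : ∀ u ∈ S, 0 ≤ b u) (hAmax : ∀ u ∈ S, b u + 4 * g * (Nb u).card ≤ Amax)
    (hconf : ∀ a : ℤ, 0 ≤ a → a ≤ Amax →
      (S.filter (fun u => b u - g ≤ a + g * (h + 1) ∧ a ≤ b u + 4 * g * (Nb u).card)).card ≤ N)
    (hpar : lev s ≠ 0 → ∃ p ∈ Nb s, p ∉ P) :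
    ∃ f' y', SState Nb b lev g m (insert s P) f' y' := by
  classical
  have hgz : (0 : ℤ) < g := by exact_mod_cast hg
  -- back neighbours in the high state
  set neg : Finset V := (Nb s).filter
    (fun u => u ∈ P ∧ b u + ∑ v ∈ Nb u, f u v = y u + g) with hneg
  set x : ℤ := b s + ∑ v ∈ Nb s, f s v - g * neg.card with hx
  have hx0 : 0 ≤ x := by
    have h1 : ∑ v ∈ neg, f s v ≤ ∑ v ∈ Nb s, f s v :=
      Finset.sum_le_sum_of_subset_of_nonneg (Finset.filter_subset _ _)
        fun v _ _ => (hst.bounds hg s v).1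
    have h2 : ∑ v ∈ neg, (g : ℤ) ≤ ∑ v ∈ neg, f s v := by
      apply Finset.sum_le_sum
      intro v hv
      rw [hst.symm]
      exact hst.half0 v s ((Finset.mem_filter.1 hv).2.1) hsP
    simp only [Finset.sum_const, nsmul_eq_mul] at h2
    have := hb0 s hs
    linarith [mul_comm (g : ℤ) neg.card]
  have hxA : x ≤ Amax := by
    have := (hst.tot_bounds hg s).2
    have := hAmax s hs
    have : (0 : ℤ) ≤ g * neg.card := by positivity
    linarith
  -- choose the slot
  have hslot : ∃ a j : ℕ, a < g ∧ j ≤ h ∧ (lev s = 0 → a = 0) ∧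
      (lev s ≠ 0 → (x + a + g * j) / g % m = 0) ∧ (lev s = 0 → (x + a + g * j) / g % m = 2) ∧
      ∀ u ∈ P, y u ≠ x + a + g * j := by
    by_cases hl : lev s = 0
    · obtain ⟨a, j, ha, hj, hr, hF⟩ := find_slot g m h 1 R hg (by omega) hg hR 2 (by norm_num)
        (by exact_mod_cast (by omega : 2 < m)) x ((P.filter (fun u => lev u = 0)).image y) (by
          rw [one_mul]
          refine lt_of_le_of_lt (Finset.card_image_le.trans ?_) hroots
          exact Finset.card_le_card (Finset.filter_subset_filter _ hPS))
      refine ⟨a, j, by omega, hj, fun _ => by omega, fun h0 => absurd hl h0, fun _ => hr, ?_⟩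
      intro u hu he
      by_cases hlu : lev u = 0
      · exact hF (Finset.mem_image.2 ⟨u, by simp [hu, hlu], he⟩)
      · have := hst.nonroot u hu hlu
        rw [he] at this; omega
    · obtain ⟨a, j, ha, hj, hr, hF⟩ := find_slot g m h g R hg (by omega) le_rfl hR 0 le_rfl
        (by exact_mod_cast (by omega : 0 < m)) x ((S.filter (fun u => b u - g ≤ x + g * (h + 1) ∧
          x ≤ b u + 4 * g * (Nb u).card)).image y)
          (lt_of_le_of_lt (Finset.card_image_le.trans (hconf x hx0 hxA)) hN)
      refine ⟨a, j, ha, hj, fun h0 => absurd h0 hl, fun _ => hr, fun h0 => absurd h0 hl, ?_⟩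
      intro u hu he
      apply hF
      refine Finset.mem_image.2 ⟨u, ?_, he⟩
      have hz1 : x ≤ y u := by
        rw [he]; have : (0 : ℤ) ≤ g * j := by positivity
        omega
      have hz2 : y u ≤ x + g * (h + 1) := by
        rw [he]
        have : (g : ℤ) * j ≤ g * h := by
          apply mul_le_mul_of_nonneg_left _ hgz.le; exact_mod_cast hj
        have : (a : ℤ) < g := by exact_mod_cast ha
        linarith
      have ht := hst.tot_bounds hg u
      have hty := hst.tot u hu
      simp only [Finset.mem_filter]
      refine ⟨hPS hu, ?_, ?_⟩
      · rcases hty with h1 | h1 <;> linarith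
      · rcases hty with h1 | h1 <;> linarith
  obtain ⟨a, j, ha, hj, hra, hnr, hrt, hfree⟩ := hslot
  obtain ⟨J, hJs, hJc⟩ := Finset.exists_subset_card_eq (hj.trans hdeg)
  -- the tuned forward edge
  obtain ⟨T, hTs, hTsum⟩ : ∃ T : Finset V, (∀ p ∈ T, p ∈ Nb s ∧ p ∉ P) ∧
      (a : ℤ) * T.card = a ∧ T.card ≤ 1 := by
    by_cases hl : lev s = 0
    · exact ⟨∅, by simp, by simp [hra hl]⟩
    · obtain ⟨p, hp, hpP⟩ := hpar hl
      exact ⟨{p}, by simp [hp, hpP], by simp⟩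
  set c : V → ℤ := fun u => (if u ∈ J then (g : ℤ) else 0) - (if u ∈ neg then (g : ℤ) else 0)
    + (if u ∈ T then (a : ℤ) else 0) with hc
  set f' : V → V → ℤ := fun u v => f u v + (if u = s then (if v ∈ Nb s then c v else 0) else
    if v = s then (if u ∈ Nb s then c u else 0) else 0) with hf'
  have hf's : ∀ v, f' s v = f s v + (if v ∈ Nb s then c v else 0) := by
    intro v; simp [hf']
  have hf's2 : ∀ v, v ≠ s → f' v s = f v s + (if v ∈ Nb s then c v else 0) := by
    intro v hv; simp [hf', hv]
  have hf'o : ∀ u v, u ≠ s → v ≠ s → f' u v = f u v := by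
    intro u v hu hv; simp [hf', hu, hv]
  have hsne : ∀ u ∈ P, u ≠ s := fun u hu he => hsP (he ▸ hu)
  have hcP : ∀ u ∈ P, c u = (if u ∈ J then (g : ℤ) else 0) - (if u ∈ neg then (g : ℤ) else 0) := by
    intro u hu
    have : u ∉ T := fun hT => (hTs u hT).2 hu
    simp [hc, this]
  have hcO : ∀ u, u ∉ P → c u = (if u ∈ J then (g : ℤ) else 0) + (if u ∈ T then (a : ℤ) else 0) := by
    intro u hu
    have : u ∉ neg := fun hT => hu (Finset.mem_filter.1 hT).2.1
    simp [hc, this]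
  have haz : (a : ℤ) < g := by exact_mod_cast ha
  have haz0 : (0 : ℤ) ≤ a := by positivity
  -- bounds of the changed edges
  have hedgeP : ∀ u ∈ P, 0 ≤ f' s u ∧ f' s u ≤ 4 * g - 1 := by
    intro u hu
    rw [hf's, hst.symm]
    have h1 := hst.half0 u s hu hsP
    have h2 := hst.half1 u s hu hsP
    have := hcP u hu
    split_ifs at this ⊢ <;> constructor <;> linarith
  have hedgeO : ∀ u, u ∉ P → (g : ℤ) ≤ f' s u ∧ f' s u ≤ 3 * g - 1 := by
    intro u hu
    rw [hf's, hst.out s u hsP hu]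
    have := hcO u hu
    split_ifs at this ⊢ <;> constructor <;> linarith
  have hf'symm : ∀ u v, f' u v = f' v u := by
    intro u v
    by_cases hu : u = s
    · subst hu
      by_cases hv : v = u
      · rw [hv]
      · rw [hf's, hf's2 v hv, hst.symm]
    · by_cases hv : v = s
      · subst hv; rw [hf's, hf's2 u hu, hst.symm]
      · rw [hf'o u v hu hv, hf'o v u hv hu, hst.symm]
  have htots : b s + ∑ v ∈ Nb s, f' s v = x + a + g * j := by
    have h1 : ∑ v ∈ Nb s, f' s v = ∑ v ∈ Nb s, f s v + ∑ v ∈ Nb s, c v := by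
      rw [← Finset.sum_add_distrib]
      apply Finset.sum_congr rfl
      intro v hv; rw [hf's]; simp [hv]
    have hTsub : T ⊆ Nb s := fun p hp => (hTs p hp).1
    have h2 : ∑ v ∈ Nb s, c v = g * j - g * neg.card + a := by
      simp only [hc, Finset.sum_add_distrib, Finset.sum_sub_distrib, Finset.sum_ite_mem]
      rw [Finset.inter_eq_right.2 hJs, Finset.inter_eq_right.2 (Finset.filter_subset _ _),
        Finset.inter_eq_right.2 hTsub]
      simp only [Finset.sum_const, nsmul_eq_mul, hJc]
      linarith [hTsum.1, mul_comm (a : ℤ) T.card, mul_comm (g : ℤ) j, mul_comm (g : ℤ) neg.card]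
    rw [h1, h2, hx]; ring
  have htotu : ∀ u ∈ P, b u + ∑ v ∈ Nb u, f' u v = y u ∨
      b u + ∑ v ∈ Nb u, f' u v = y u + g := by
    intro u hu
    have hus := hsne u hu
    by_cases hadj : u ∈ Nb s
    · have hadj' : s ∈ Nb u := (hsymm u (hPS hu) s hs).1 hadj
      have h1 : ∑ v ∈ Nb u, f' u v = ∑ v ∈ Nb u, f u v + c u := by
        have : ∀ v ∈ Nb u, f' u v = f u v + (if v = s then c u else 0) := by
          intro v hv
          by_cases hvs : v = s
          · subst hvs; rw [hf's2 u hus]; simp [hadj]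
          · rw [hf'o u v hus hvs]; simp [hvs]
        rw [Finset.sum_congr rfl this, Finset.sum_add_distrib, Finset.sum_ite_eq']
        simp [hadj']
      rw [h1, hcP u hu]
      by_cases hn : u ∈ neg
      · have h3 := (Finset.mem_filter.1 hn).2.2
        simp only [hn, if_true]
        split_ifs
        · right; linarith
        · left; linarith
      · have h3 : b u + ∑ v ∈ Nb u, f u v = y u := by
          rcases hst.tot u hu with h4 | h4
          · exact h4
          · exact absurd (Finset.mem_filter.2 ⟨hadj, hu, h4⟩) hn
        simp only [hn, if_false]
        split_ifs
        · right; linarith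
        · left; linarith
    · have hadj' : s ∉ Nb u := fun h0 => hadj ((hsymm u (hPS hu) s hs).2 h0)
      have h1 : ∑ v ∈ Nb u, f' u v = ∑ v ∈ Nb u, f u v := by
        apply Finset.sum_congr rfl
        intro v hv
        exact hf'o u v hus (fun he => hadj' (he ▸ hv))
      rw [h1]; exact hst.tot u hu
  have hyu : ∀ u ∈ P, Function.update y s (x + a + g * j) u = y u := fun u hu => by
    rw [Function.update_of_ne (hsne u hu)]
  refine ⟨f', Function.update y s (x + a + g * j), ?_⟩
  constructor
  · exact hf'symm
  · intro u v hu hv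
    simp only [Finset.mem_insert, not_or] at hu hv
    rw [hf'o u v hu.1 hv.1]; exact hst.out u v hu.2 hv.2
  · intro u v hu hv
    simp only [Finset.mem_insert, not_or] at hu hv
    rcases hu with rfl | hu
    · exact (hedgeO v hv.2).1
    · rw [hf'o u v (hsne u hu) hv.1]; exact hst.half0 u v hu hv.2
  · intro u v hu hv
    simp only [Finset.mem_insert, not_or] at hu hv
    rcases hu with rfl | hu
    · exact (hedgeO v hv.2).2
    · rw [hf'o u v (hsne u hu) hv.1]; exact hst.half1 u v hu hv.2
  · intro u v hu hv
    simp only [Finset.mem_insert] at hu hv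
    rcases hu with rfl | hu
    · rcases hv with rfl | hv
      · have := (hedgeO v hsP).1; linarith
      · exact (hedgeP v hv).1
    · rcases hv with rfl | hv
      · rw [hf'symm]; exact (hedgeP u hu).1
      · rw [hf'o u v (hsne u hu) (hsne v hv)]; exact hst.full0 u v hu hv
  · intro u v hu hv
    simp only [Finset.mem_insert] at hu hv
    rcases hu with rfl | hu
    · rcases hv with rfl | hv
      · have := (hedgeO v hsP).2; linarith
      · exact (hedgeP v hv).2
    · rcases hv with rfl | hv
      · rw [hf'symm]; exact (hedgeP u hu).2
      · rw [hf'o u v (hsne u hu) (hsne v hv)]; exact hst.full1 u v hu hv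
  · intro u hu
    rcases Finset.mem_insert.1 hu with rfl | hu
    · left; rw [Function.update_self]; exact htots
    · rw [hyu u hu]; exact htotu u hu
  · intro u hu v hv huv
    rcases Finset.mem_insert.1 (Finset.mem_coe.1 hu) with rfl | hu'
    · rcases Finset.mem_insert.1 (Finset.mem_coe.1 hv) with rfl | hv
      · rfl
      · rw [hyu v hv, Function.update_self] at huv; exact absurd huv.symm (hfree v hv)
    · rcases Finset.mem_insert.1 (Finset.mem_coe.1 hv) with rfl | hv
      · rw [hyu u hu', Function.update_self] at huv; exact absurd huv (hfree u hu')
      · rw [hyu v hv, hyu u hu'] at huv; exact hst.inj hu' hv huv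
  · intro u hu hl
    rcases Finset.mem_insert.1 hu with rfl | hu
    · rw [Function.update_self]; exact hnr hl
    · rw [hyu u hu]; exact hst.nonroot u hu hl
  · intro u hu hl
    rcases Finset.mem_insert.1 hu with rfl | hu
    · rw [Function.update_self]; exact hrt hl
    · rw [hyu u hu]; exact hst.root u hu hl

/-- The small set can be finished. -/
lemma small_set_finish {V : Type*} [DecidableEq V] (Nb : V → Finset V) (b : V → ℤ) (lev : V → ℕ)
    (g m : ℕ) (S : Finset V) (hsymm : ∀ u ∈ S, ∀ v ∈ S, (u ∈ Nb v ↔ v ∈ Nb u))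
    (hg : 0 < g) (hm : 4 ≤ m) (h R N : ℕ) (hR : m * R ≤ h + 1)
    (hdeg : ∀ s ∈ S, h ≤ (Nb s).card)
    (hN : N < g * R) (hroots : (S.filter (fun u => lev u = 0)).card < R)
    (Amax : ℤ) (hb0 : ∀ u ∈ S, 0 ≤ b u) (hAmax : ∀ u ∈ S, b u + 4 * g * (Nb u).card ≤ Amax)
    (hconf : ∀ a : ℤ, 0 ≤ a → a ≤ Amax →
      (S.filter (fun u => b u - g ≤ a + g * (h + 1) ∧ a ≤ b u + 4 * g * (Nb u).card)).card ≤ N)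
    (hpar : ∀ s ∈ S, lev s ≠ 0 → ∃ p ∈ Nb s, lev p < lev s) :
    ∃ f : V → V → ℤ, (∀ u v, f u v = f v u) ∧ (∀ u v, 0 ≤ f u v ∧ f u v ≤ 4 * g - 1) ∧
      Set.InjOn (fun u => b u + ∑ v ∈ Nb u, f u v) S ∧
      ∀ u ∈ S, (b u + ∑ v ∈ Nb u, f u v) / g % m < 4 := by
  classical
  have hgz : (0 : ℤ) < g := by exact_mod_cast hg
  have key : ∀ P : Finset V, P ⊆ S → (∀ u ∈ P, ∀ v ∈ S, lev u < lev v → v ∈ P) →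
      ∃ f y, SState Nb b lev g m P f y := by
    intro P
    induction P using Finset.induction_on_max_value (fun v => -(lev v : ℤ)) with
    | empty =>
      intro _ _
      refine ⟨fun _ _ => g, fun _ => 0, ?_⟩
      constructor <;> simp
    | insert a P ha hmax ih =>
      intro hsub hcl
      have hPS : P ⊆ S := (Finset.subset_insert _ _).trans hsub
      obtain ⟨f, y, hst⟩ := ih hPS (by
        intro u hu v hv huv
        have h1 := hcl u (Finset.mem_insert_of_mem hu) v hv huv
        rcases Finset.mem_insert.1 h1 with rfl | h1
        · have := hmax u hu
          omega
        · exact h1)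
      have haS := hsub (Finset.mem_insert_self a P)
      refine hst.step S hPS a haS ha hsymm hg hm h R N hR (hdeg a haS) hN hroots
        Amax hb0 hAmax hconf ?_
      intro hl
      obtain ⟨p, hp, hlp⟩ := hpar a haS hl
      refine ⟨p, hp, fun hpP => ?_⟩
      have := hmax p hpP
      omega
  obtain ⟨f, y, hst⟩ := key S le_rfl (fun _ _ v hv _ => hv)
  have hmz : (4 : ℤ) ≤ m := by exact_mod_cast hm
  have hshift : ∀ z : ℤ, (z + g) / g = z / g + 1 := by
    intro z
    rw [Int.add_ediv_of_dvd_right (dvd_refl _), Int.ediv_self hgz.ne']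
  have hadd1 : ∀ z r : ℤ, z % m = r → 0 ≤ r → r + 1 < m → (z + 1) % m = r + 1 := by
    intro z r hz h0 h1
    rw [Int.add_emod, hz, Int.emod_eq_of_lt (by omega : (0:ℤ) ≤ 1) (by omega : (1:ℤ) < m)]
    exact Int.emod_eq_of_lt (by omega) h1
  have hcase : ∀ u ∈ S, ∃ r : ℤ, (r = 0 ∨ r = 2) ∧
      y u / g % m = r ∧ (y u + g) / g % m = r + 1 := by
    intro u hu
    by_cases hl : lev u = 0
    · have h1 := hst.root u hu hl
      exact ⟨2, Or.inr rfl, h1, by rw [hshift]; exact hadd1 _ _ h1 (by omega) (by omega)⟩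
    · have h1 := hst.nonroot u hu hl
      exact ⟨0, Or.inl rfl, h1, by rw [hshift]; exact hadd1 _ _ h1 (by omega) (by omega)⟩
  refine ⟨f, hst.symm, hst.bounds hg, ?_, ?_⟩
  · intro u hu v hv huv
    simp only at huv
    apply hst.inj hu hv
    obtain ⟨r, hr, h1, h2⟩ := hcase u hu
    obtain ⟨r', hr', h1', h2'⟩ := hcase v hv
    rcases hst.tot u hu with e | e <;> rcases hst.tot v hv with e' | e'
    · linarith
    · have : y u = y v + g := by linarith
      rw [this] at h1; omega
    · have : y u + g = y v := by linarith
      rw [this] at h2; omega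
    · linarith
  · intro u hu
    obtain ⟨r, hr, h1, h2⟩ := hcase u hu
    rcases hst.tot u hu with e | e <;> rw [e] <;> omega

/-- A level structure with few roots. -/
lemma exists_levels {V : Type*} [DecidableEq V] (Nb : V → Finset V) (S : Finset V)
    (hNbS : ∀ u ∈ S, Nb u ⊆ S) (hsymm : ∀ u ∈ S, ∀ v ∈ S, (u ∈ Nb v ↔ v ∈ Nb u))
    (h : ℕ) (hdeg : ∀ s ∈ S, h ≤ (Nb s).card) :
    ∃ lev : V → ℕ, (S.filter (fun u => lev u = 0)).card * h ≤ S.card ∧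
      ∀ s ∈ S, lev s ≠ 0 → ∃ p ∈ Nb s, lev p < lev s := by
  classical
  set C : V → Finset V := fun v => insert v (Nb v) with hC
  have hfin : (S.powerset.filter (fun Z : Finset V => (Z : Set V).PairwiseDisjoint C)).Nonempty :=
    ⟨∅, by simp⟩
  obtain ⟨Z, hZ, hZmax⟩ := Finset.exists_max_image _ Finset.card hfin
  simp only [Finset.mem_filter, Finset.mem_powerset] at hZ hZmax
  obtain ⟨hZS, hZd⟩ := hZ
  refine ⟨fun v => if v ∈ Z then 0 else if ∃ z ∈ Z, z ∈ Nb v then 1 else 2, ?_, ?_⟩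
  · have h1 : S.filter (fun u => (if u ∈ Z then 0 else if ∃ z ∈ Z, z ∈ Nb u then 1 else 2) = 0) ⊆ Z := by
      intro u hu
      simp only [Finset.mem_filter] at hu
      by_contra hc
      have h2 := hu.2
      rw [if_neg hc] at h2
      split_ifs at h2
    calc _ ≤ Z.card * h := Nat.mul_le_mul_right _ (Finset.card_le_card h1)
      _ = ∑ z ∈ Z, h := by simp
      _ ≤ ∑ z ∈ Z, (C z).card := Finset.sum_le_sum fun z hz =>
          (hdeg z (hZS hz)).trans (Finset.card_le_card (Finset.subset_insert _ _))
      _ = (Z.biUnion C).card := (Finset.card_biUnion hZd).symm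
      _ ≤ S.card := by
          apply Finset.card_le_card
          intro x hx
          obtain ⟨z, hz, hxz⟩ := Finset.mem_biUnion.1 hx
          rcases Finset.mem_insert.1 hxz with rfl | hxz
          · exact hZS hz
          · exact hNbS z (hZS hz) hxz
  · intro s hs hl
    have hsZ : s ∉ Z := fun hz => hl (by simp [hz])
    by_cases h1 : ∃ z ∈ Z, z ∈ Nb s
    · obtain ⟨z, hz, hzs⟩ := h1
      refine ⟨z, hzs, ?_⟩
      have : ∃ z ∈ Z, z ∈ Nb s := ⟨z, hz, hzs⟩
      simp [hz, hsZ, this]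
    · have h2 : ∃ z ∈ Z, ¬ Disjoint (C s) (C z) := by
        by_contra hc
        push Not at hc
        have h3 := hZmax (insert s Z) ⟨Finset.insert_subset hs hZS, by
          rw [Finset.coe_insert]
          exact hZd.insert (fun z hz _ => hc z hz)⟩
        rw [Finset.card_insert_of_notMem hsZ] at h3
        omega
      obtain ⟨z, hz, hd⟩ := h2
      rw [Finset.not_disjoint_iff] at hd
      obtain ⟨p, hp1, hp2⟩ := hd
      have hzS := hZS hz
      rcases Finset.mem_insert.1 hp1 with rfl | hp1
      · rcases Finset.mem_insert.1 hp2 with rfl | hp2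
        · exact absurd hz hsZ
        · exact absurd ⟨z, hz, (hsymm z hzS p hs).2 hp2⟩ h1
      · rcases Finset.mem_insert.1 hp2 with rfl | hp2
        · exact absurd ⟨p, hz, hp1⟩ h1
        · have hpS := hNbS s hs hp1
          refine ⟨p, hp1, ?_⟩
          have : ∃ z ∈ Z, z ∈ Nb p := ⟨z, hz, (hsymm z hzS p hpS).2 hp2⟩
          simp only [hsZ, h1, this, if_false, if_true]
          split_ifs <;> omega

/-- Few integers of an interval lie in the reserved blocks. -/
lemma bad_count (g m : ℕ) (hg : 0 < g) (hm : 4 ≤ m) (a ℓ : ℕ) :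
    (((Finset.Ico a (a + ℓ)).filter (fun z => z / g % m < 4)).card : ℝ)
      ≤ 4 * ℓ / m + 4 * g := by
  set q := g * m with hq
  have hqpos : 0 < q := Nat.mul_pos hg (by omega)
  set p : ℕ → Prop := fun z => z / g % m < 4 with hp
  have hper : Function.Periodic p q := by
    intro z
    simp only [hp, hq]
    rw [Nat.add_mul_div_left _ _ hg, Nat.add_mod_right]
  have hcnt : q.count p ≤ 4 * g := by
    rw [Nat.count_eq_card_filter_range]
    calc _ ≤ (Finset.range (4 * g)).card := by
          apply Finset.card_le_card
          intro z hz
          simp only [Finset.mem_filter, Finset.mem_range, hp, hq] at hz ⊢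
          have h1 : z / g < m := Nat.div_lt_of_lt_mul hz.1
          rw [Nat.mod_eq_of_lt h1] at hz
          exact (Nat.div_lt_iff_lt_mul hg).1 hz.2
      _ = _ := by simp
  have hblocks : ∀ k : ℕ, ((Finset.Ico a (a + q * k)).filter p).card ≤ 4 * g * k := by
    intro k
    induction k with
    | zero => simp
    | succ k ih =>
      have h1 : Finset.Ico a (a + q * (k + 1)) =
          Finset.Ico a (a + q * k) ∪ Finset.Ico (a + q * k) (a + q * k + q) := by
        rw [Finset.Ico_union_Ico_eq_Ico (by omega) (by omega)]
        congr 1; ring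
      rw [h1, Finset.filter_union]
      have h2 := Nat.filter_Ico_card_eq_of_periodic (a + q * k) q p hper
      have h3 := Finset.card_union_le ((Finset.Ico a (a + q * k)).filter p)
        ((Finset.Ico (a + q * k) (a + q * k + q)).filter p)
      have h4 : 4 * g * (k + 1) = 4 * g * k + 4 * g := by ring
      omega
  have h1 : ((Finset.Ico a (a + ℓ)).filter p).card ≤ 4 * g * (ℓ / q + 1) := by
    refine le_trans (Finset.card_le_card (Finset.filter_subset_filter _ ?_)) (hblocks (ℓ / q + 1))
    apply Finset.Ico_subset_Ico le_rfl
    have := Nat.lt_mul_div_succ ℓ hqpos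
    omega
  have h2 : (((Finset.Ico a (a + ℓ)).filter p).card : ℝ) ≤ 4 * g * ((ℓ / q : ℕ) + 1) := by
    exact_mod_cast h1
  have h3 : ((ℓ / q : ℕ) : ℝ) ≤ ℓ / q := Nat.cast_div_le
  have hgr : (0 : ℝ) < g := by exact_mod_cast hg
  have hmr : (0 : ℝ) < m := by exact_mod_cast (by omega : 0 < m)
  calc _ ≤ _ := h2
    _ ≤ 4 * g * ((ℓ : ℝ) / q + 1) := by
        apply mul_le_mul_of_nonneg_left _ (by positivity); linarith
    _ = 4 * ℓ / m + 4 * g := by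
        rw [hq]; push_cast; field_simp

lemma good_count (g m : ℕ) (hg : 0 < g) (hm : 4 ≤ m) (a c : ℕ) (hac : a ≤ c) :
    ((c : ℝ) + 1 - a) * (1 - 4 / m) - 4 * g ≤
      (((Finset.Icc a c).filter (fun z => 4 ≤ z / g % m)).card : ℝ) := by
  have h1 := bad_count g m hg hm a (c + 1 - a)
  have h2 : Finset.Ico a (a + (c + 1 - a)) = Finset.Icc a c := by
    ext x; simp; omega
  rw [h2] at h1
  have h3 := Finset.card_filter_add_card_filter_not (s := Finset.Icc a c) (fun z => z / g % m < 4)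
  simp only [not_lt, Nat.card_Icc] at h3
  have h4 : (((Finset.Icc a c).filter (fun z => z / g % m < 4)).card : ℝ) +
      (((Finset.Icc a c).filter (fun z => 4 ≤ z / g % m)).card : ℝ) = c + 1 - a := by
    have : ((c + 1 - a : ℕ) : ℝ) = c + 1 - a := by
      rw [Nat.cast_sub (by omega)]; push_cast; ring
    rw [← this]; exact_mod_cast h3
  have h5 : ((c + 1 - a : ℕ) : ℝ) = c + 1 - a := by
    rw [Nat.cast_sub (by omega)]; push_cast; ring
  rw [h5] at h1
  have : ((c : ℝ) + 1 - a) * (1 - 4 / m) = (c + 1 - a) - 4 * (c + 1 - a) / m := by ring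
  linarith

/-- Arithmetic facts about the parameters. -/
lemma params (n δ m K : ℕ) (hm : 10 ≤ m) (hK : K = 400 * m)
    (hnK : (n : ℝ) + 4000 * δ ≤ K * δ) (L : ℝ) (hL1 : 1 ≤ L)
    (hLδ : 10 ^ 6 * (K : ℝ) ^ 2 * L ≤ √δ) (h : ℕ) (hh : h = δ / (2 * K)) :
    (0 : ℝ) < δ ∧ (δ : ℝ) / (2 * K) - 1 ≤ h ∧ (h : ℝ) ≤ δ / (2 * K) ∧
    √(n : ℝ) ≤ K * √δ ∧ K * L * √δ ≤ δ / (10 ^ 6 * K) ∧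
    (K : ℝ) ^ 3 ≤ δ / (10 ^ 6 * K) ∧ (4000 : ℝ) ≤ K := by
  have hK4 : (4000 : ℝ) ≤ K := by exact_mod_cast (by omega : 4000 ≤ K)
  have hK0 : (0 : ℝ) < K := by linarith
  have ht : 0 < √(δ : ℝ) := lt_of_lt_of_le (by positivity) hLδ
  have hδ : (0 : ℝ) < δ := Real.sqrt_pos.1 ht
  have hsq : √(δ : ℝ) * √δ = δ := Real.mul_self_sqrt hδ.le
  refine ⟨hδ, ?_, ?_, ?_, ?_, ?_, hK4⟩
  · have h1 := Nat.lt_div_mul_add (a := δ) (b := 2 * K) (by omega)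
    have h2 : (δ : ℝ) < h * (2 * K) + 2 * K := by rw [hh]; exact_mod_cast h1
    rw [sub_le_iff_le_add, div_le_iff₀ (by positivity)]
    linarith
  · rw [hh]
    have := Nat.cast_div_le (α := ℝ) (m := δ) (n := 2 * K)
    push_cast at this; exact this
  · have h1 : (n : ℝ) ≤ K * δ := by nlinarith
    rw [Real.sqrt_le_left (by positivity), mul_pow, Real.sq_sqrt hδ.le]
    nlinarith
  · rw [le_div_iff₀ (by positivity)]
    nlinarith
  · rw [le_div_iff₀ (by positivity)]
    have h1 : 10 ^ 6 * (K : ℝ) ^ 2 ≤ √δ := le_trans (by nlinarith [sq_nonneg (K : ℝ)]) hLδ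
    have h2 := mul_le_mul h1 h1 (by positivity) ht.le
    rw [hsq] at h2
    nlinarith [pow_pos hK0 4]

set_option maxHeartbeats 4000000 in
/-- Deterministic part: from the quasirandomness conditions to an irregular assignment. -/
lemma assemble {V : Type*} [Fintype V] [DecidableEq V] (G : SimpleGraph V) [DecidableRel G.Adj]
    (n δ m K g : ℕ) (hn : Fintype.card V = n) (hδ : ∀ v, δ ≤ G.degree v)
    (hm : 10 ≤ m) (hK : K = 400 * m) (hg : g = 100 * m)
    (hnK : (n : ℝ) + 4000 * δ ≤ K * δ) (L : ℝ) (hL1 : 1 ≤ L)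
    (hLδ : 10 ^ 6 * (K : ℝ) ^ 2 * L ≤ √δ)
    (X : V → ℕ) (S : Finset V)
    (E1 : ∀ v, |(((G.neighborFinset v).filter (fun u => n ≤ X u + X v)).card : ℝ)
      - G.degree v * X v / n| ≤ L * √(G.degree v))
    (E2 : ∀ v, |(((G.neighborFinset v).filter (fun u => u ∈ S)).card : ℝ)
      - G.degree v / K| ≤ L * √(G.degree v))
    (E3 : ∀ a c : ℕ, a ≤ c → c ≤ n * (2 * K + 2) →
      ((Finset.univ.filter (fun v : V =>
        (a : ℝ) - G.degree v - K * L * √(G.degree v) ≤ K * G.degree v * X v / n ∧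
        K * G.degree v * X v / n ≤ (c : ℝ) - G.degree v + K * L * √(G.degree v))).card : ℝ)
      ≤ n * (c - a) / (K * δ) + 2 * n * L / √δ + 1 + L * √n)
    (E4 : ∀ a : ℕ, a ≤ n * (2 * K + 2) →
      ((S.filter (fun v : V =>
        (a : ℝ) - 5 * G.degree v ≤ K * G.degree v * X v / n ∧
        K * G.degree v * X v / n ≤ (a : ℝ) + 4 * G.degree v)).card : ℝ)
      ≤ 9 * n / K ^ 2 + 1 + L * √n) :
    ∃ f : Sym2 V → ℕ, IsIrregularAssignment G (K + 2) f := by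
  set h : ℕ := δ / (2 * K) with hh
  obtain ⟨hδ0, hh1, hh2, hsn, hKLt, hK3, hK4⟩ := params n δ m K hm hK hnK L hL1 hLδ h hh
  have hK0 : (0 : ℝ) < K := by linarith
  have hg0 : 0 < g := by omega
  have hL0 : 0 < L := by linarith
  have hgK : (4 : ℝ) * g = K := by rw [hg, hK]; push_cast; ring
  have hmK : (K : ℝ) = 400 * m := by rw [hK]; push_cast; ring
  have hm0 : (0 : ℝ) < m := by exact_mod_cast (by omega : 0 < m)
  have hsq : √(δ : ℝ) * √δ = δ := Real.mul_self_sqrt hδ0.le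
  have ht0 : 0 < √(δ : ℝ) := Real.sqrt_pos.2 hδ0
  have hdK : (0 : ℝ) < δ / K := by positivity
  have e106 : (δ : ℝ) / (10 ^ 6 * K) = (δ / K) / 10 ^ 6 := by field_simp
  have e2K : (δ : ℝ) / (2 * K) = (δ / K) / 2 := by field_simp
  rw [e106] at hKLt hK3
  rw [e2K] at hh1 hh2
  have hKcube : (K : ℝ) ≤ K ^ 3 := by nlinarith [sq_nonneg ((K : ℝ))]
  have hK3' : (16000000 : ℝ) * K ≤ K ^ 3 := by nlinarith [sq_nonneg ((K : ℝ))]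
  have hnle : (n : ℝ) ≤ K * δ := by nlinarith
  have hdn : ∀ v, G.degree v ≤ n := fun v => hn ▸ (G.degree_lt_card_verts v).le
  -- facts about the degrees
  have hdr : ∀ v, (δ : ℝ) ≤ G.degree v := fun v => by exact_mod_cast hδ v
  have hdd : ∀ v, 2 * K * (L * √(G.degree v)) ≤ G.degree v := by
    intro v
    have h1 : √(δ : ℝ) ≤ √(G.degree v) := Real.sqrt_le_sqrt (hdr v)
    have h2 : √(G.degree v : ℝ) * √(G.degree v) = G.degree v :=
      Real.mul_self_sqrt (by positivity)
    have h3 : 2 * K * L ≤ √(G.degree v : ℝ) := by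
      refine le_trans ?_ h1
      refine le_trans ?_ hLδ
      have : 2 * (K : ℝ) ≤ 10 ^ 6 * K ^ 2 := by nlinarith
      nlinarith
    nlinarith [Real.sqrt_nonneg (G.degree v : ℝ)]
  set Nb : V → Finset V := fun v => (G.neighborFinset v).filter (fun u => u ∈ S) with hNb
  have hNbU : ∀ v, (K : ℝ) * (Nb v).card ≤ 2 * G.degree v := by
    intro v
    have h1 := (abs_le.1 (E2 v)).2
    have h2 := hdd v
    have h3 : ((Nb v).card : ℝ) ≤ G.degree v / K + L * √(G.degree v) := by
      simp only [hNb]; linarith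
    have h4 : (K : ℝ) * (Nb v).card ≤ K * (G.degree v / K + L * √(G.degree v)) :=
      mul_le_mul_of_nonneg_left h3 hK0.le
    have h5 : (K : ℝ) * (G.degree v / K + L * √(G.degree v)) =
      G.degree v + K * (L * √(G.degree v)) := by field_simp
    have h6 : (0 : ℝ) ≤ G.degree v := by positivity
    linarith
  have hNbL : ∀ v, h ≤ (Nb v).card := by
    intro v
    have h1 := (abs_le.1 (E2 v)).1
    have h2 := hdd v
    have h3 : (G.degree v : ℝ) / K - L * √(G.degree v) ≤ (Nb v).card := by
      simp only [hNb]; linarith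
    have h4 : L * √(G.degree v) ≤ G.degree v / K / 2 := by
      rw [div_div, le_div_iff₀ (by positivity)]; linarith
    have h5 : (δ : ℝ) / K ≤ G.degree v / K := div_le_div_of_nonneg_right (hdr v) hK0.le
    have : (h : ℝ) ≤ (Nb v).card := by linarith
    exact_mod_cast this
  -- initial weights
  set hi : V → V → ℕ := fun u v => if n ≤ X u + X v then K else 0 with hhi
  have hisymm : ∀ u v, hi u v = hi v u := by intro u v; simp only [hhi, add_comm]
  have hiK : ∀ u v, hi u v ≤ K := by intro u v; simp only [hhi]; split_ifs <;> omega
  set w : V → ℕ := fun v => ∑ u ∈ G.neighborFinset v, (1 + hi u v) with hw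
  have hwcard : ∀ v, w v = G.degree v +
      K * ((G.neighborFinset v).filter (fun u => n ≤ X u + X v)).card := by
    intro v
    simp only [hw, hhi, Finset.sum_add_distrib, Finset.sum_const, smul_eq_mul, mul_one,
      ← Finset.sum_filter, SimpleGraph.card_neighborFinset_eq_degree]
    ring
  have hwle : ∀ v, w v ≤ n * (K + 1) := by
    intro v
    have h1 := Finset.card_filter_le (G.neighborFinset v) (fun u => n ≤ X u + X v)
    rw [SimpleGraph.card_neighborFinset_eq_degree] at h1
    have h2 := hdn v
    have h3 := Nat.mul_le_mul_left K (h1.trans h2)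
    have h4 : n * (K + 1) = n + K * n := by ring
    rw [hwcard]; omega
  have hwr : ∀ v, |(w v : ℝ) - G.degree v - K * G.degree v * X v / n| ≤
      K * L * √(G.degree v) := by
    intro v
    rw [hwcard]; push_cast
    have h1 := mul_le_mul_of_nonneg_left (E1 v) hK0.le
    rw [← abs_of_pos hK0, ← abs_mul, abs_of_pos hK0] at h1
    calc _ = _ := by congr 1; ring
      _ ≤ _ := h1
      _ = _ := by ring
  -- placement of the big set
  have hff : ∃ t : V → ℕ, (∀ v ∈ Sᶜ, 4 ≤ t v / g % m ∧ w v ≤ t v ∧ t v ≤ w v + h) ∧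
      Set.InjOn t (Sᶜ : Finset V) := by
    apply first_fit w (fun z => 4 ≤ z / g % m)
    · intro k
      refine ⟨g * (m * k + 4), ?_, ?_⟩
      · have : 1 ≤ g * m := Nat.mul_pos hg0 (by omega)
        nlinarith
      · rw [Nat.mul_div_cancel_left _ hg0, Nat.mul_add_mod, Nat.mod_eq_of_lt (by omega)]
    · intro u _ v _ huv
      have h1 := E3 (w u) (w v) huv ((hwle v).trans (Nat.mul_le_mul_left _ (by omega)))
      have h2 := good_count g m hg0 (by omega) (w u) (w v + h) (huv.trans (Nat.le_add_right _ _))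
      have h3 : (((Sᶜ).filter (fun x => w u ≤ w x ∧ w x ≤ w v)).card : ℝ) ≤
          ((Finset.univ.filter (fun x : V =>
        (w u : ℝ) - G.degree x - K * L * √(G.degree x) ≤ K * G.degree x * X x / n ∧
        K * G.degree x * X x / n ≤ (w v : ℝ) - G.degree x + K * L * √(G.degree x))).card : ℝ) := by
        refine Nat.cast_le.2 (Finset.card_le_card ?_)
        intro x hx
        simp only [Finset.mem_filter] at hx
        simp only [Finset.mem_filter, Finset.mem_univ, true_and]
        have h4 := abs_le.1 (hwr x)
        have h5 : (w u : ℝ) ≤ w x := by exact_mod_cast hx.2.1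
        have h6 : (w x : ℝ) ≤ w v := by exact_mod_cast hx.2.2
        constructor <;> linarith
      have h4 : (n : ℝ) / (K * δ) ≤ 1 - 4 / m := by
        rw [div_le_iff₀ (by positivity)]
        have : (1 - 4 / (m : ℝ)) * (K * δ) = K * δ - 1600 * δ := by rw [hmK]; field_simp; ring
        rw [this]; linarith
      have hℓ : (0 : ℝ) ≤ (w v : ℝ) - w u := by
        have : (w u : ℝ) ≤ w v := by exact_mod_cast huv
        linarith
      have h5 : (n : ℝ) * (w v - w u) / (K * δ) ≤ (w v - w u) * (1 - 4 / m) := by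
        calc _ = (w v - w u) * ((n : ℝ) / (K * δ)) := by ring
          _ ≤ _ := mul_le_mul_of_nonneg_left h4 hℓ
      have h6 : 2 * n * L / √δ ≤ 2 * (K * L * √δ) := by
        rw [div_le_iff₀ ht0]
        have : 2 * (K * L * √δ) * √δ = 2 * L * (K * δ) := by
          calc _ = 2 * L * (K * (√δ * √δ)) := by ring
            _ = _ := by rw [hsq]
        rw [this]; nlinarith
      have h7 : L * √n ≤ K * L * √δ := by
        calc _ ≤ L * (K * √δ) := mul_le_mul_of_nonneg_left hsn hL0.le
          _ = _ := by ring
      have h8 : (1 : ℝ) / 2 ≤ 1 - 4 / m := by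
        have : (4 : ℝ) / m ≤ 1 / 2 := by
          rw [div_le_iff₀ hm0]
          have : (10 : ℝ) ≤ m := by exact_mod_cast hm
          linarith
        linarith
      push_cast at h2
      have h9 : ((h : ℝ) + 1) * (1 / 2) ≤ (h + 1) * (1 - 4 / m) :=
        mul_le_mul_of_nonneg_left h8 (by positivity)
      have h10 : ((w v : ℝ) + h + 1 - w u) * (1 - 4 / m) =
        (w v - w u) * (1 - 4 / m) + (h + 1) * (1 - 4 / m) := by ring
      have : (((Sᶜ).filter (fun x => w u ≤ w x ∧ w x ≤ w v)).card : ℝ) ≤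
        (((Finset.Icc (w u) (w v + h)).filter (fun z => 4 ≤ z / g % m)).card : ℝ) := by
        linarith
      exact_mod_cast this
  obtain ⟨t, ht, htinj⟩ := hff
  -- the correcting edges
  have hJ : ∀ v, ∃ J : Finset V, J ⊆ Nb v ∧ (v ∈ S → J = ∅) ∧ (v ∉ S → w v + J.card = t v) := by
    intro v
    by_cases hv : v ∈ S
    · exact ⟨∅, by simp, fun _ => rfl, fun h0 => absurd hv h0⟩
    · obtain ⟨_, h1, h2⟩ := ht v (by simpa using hv)
      obtain ⟨J, hJ1, hJ2⟩ := Finset.exists_subset_card_eq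
        (show t v - w v ≤ (Nb v).card from le_trans (by omega) (hNbL v))
      exact ⟨J, hJ1, fun h0 => absurd h0 hv, fun _ => by omega⟩
  choose J hJsub hJS hJB using hJ
  have hJmem : ∀ u v, u ∈ J v → u ∈ S ∧ v ∉ S := by
    intro u v huv
    refine ⟨(Finset.mem_filter.1 (hJsub v huv)).2, fun hv => ?_⟩
    rw [hJS v hv] at huv; simp at huv
  set F0 : V → V → ℕ := fun u v => 1 + hi u v + (if v ∈ J u then 1 else 0) +
    (if u ∈ J v then 1 else 0) with hF0
  have hF0symm : ∀ u v, F0 u v = F0 v u := by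
    intro u v; simp only [hF0, hisymm u v]; ring
  have hF0lo : ∀ u v, 1 + hi u v ≤ F0 u v := by intro u v; simp only [hF0]; omega
  have hF0hi : ∀ u v, F0 u v ≤ 2 + hi u v := by
    intro u v
    simp only [hF0]
    by_cases h1 : v ∈ J u <;> by_cases h2 : u ∈ J v
    · exact absurd (hJmem _ _ h1).1 (hJmem _ _ h2).2
    all_goals simp [h1, h2]
  set b : V → ℕ := fun s => ∑ u ∈ G.neighborFinset s, (if u ∈ S then 1 else F0 u s) with hb
  have hb1 : ∀ s, b s ≤ w s + G.degree s := by
    intro s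
    calc b s ≤ ∑ u ∈ G.neighborFinset s, ((1 + hi u s) + 1) := by
          apply Finset.sum_le_sum
          intro u _
          have := hF0hi u s
          split_ifs <;> omega
      _ = _ := by
          rw [Finset.sum_add_distrib]; simp [hw]
  have hb2 : ∀ s, w s ≤ b s + K * (Nb s).card := by
    intro s
    have h1 : K * (Nb s).card = ∑ u ∈ G.neighborFinset s, (if u ∈ S then K else 0) := by
      rw [← Finset.sum_filter, Finset.sum_const, smul_eq_mul, mul_comm]
    rw [h1, hb, hw]
    simp only
    rw [← Finset.sum_add_distrib]
    apply Finset.sum_le_sum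
    intro u _
    have := hF0lo u s
    have := hiK u s
    split_ifs <;> omega
  have hsymm : ∀ u ∈ S, ∀ v ∈ S, (u ∈ Nb v ↔ v ∈ Nb u) := by
    intro u hu v hv
    simp only [hNb, Finset.mem_filter, SimpleGraph.mem_neighborFinset, hu, hv, and_true]
    exact G.adj_comm v u
  have hNbS : ∀ u ∈ S, Nb u ⊆ S := fun u _ v hv => (Finset.mem_filter.1 hv).2
  obtain ⟨lev, hlev1, hlev2⟩ := exists_levels Nb S hNbS hsymm h (fun s _ => hNbL s)
  set R := (h + 1) / m with hR
  set N : ℕ := ⌊9 * (n : ℝ) / K ^ 2 + 1 + L * √n⌋₊ with hN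
  have hRlow : (h : ℝ) + 1 ≤ m * R + m := by
    have h1 := Nat.lt_div_mul_add (a := h + 1) (b := m) (by omega)
    have h2 : h + 1 ≤ m * R + m := by rw [hR, mul_comm m]; exact h1.le
    exact_mod_cast h2
  have hLn : L * √n ≤ δ / K / 10 ^ 6 := by
    refine le_trans ?_ hKLt
    calc _ ≤ L * (K * √δ) := mul_le_mul_of_nonneg_left hsn hL0.le
      _ = _ := by ring
  have hNlt : N < g * R := by
    have h1 : (N : ℝ) ≤ 9 * (n : ℝ) / K ^ 2 + 1 + L * √n := Nat.floor_le (by positivity)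
    have h2 : 9 * (n : ℝ) / K ^ 2 ≤ 9 * (δ / K) := by
      rw [div_le_iff₀ (by positivity)]
      have : 9 * ((δ : ℝ) / K) * K ^ 2 = 9 * (K * δ) := by field_simp
      rw [this]; linarith
    have h3 : (g : ℝ) * R = 100 * (m * R) := by rw [hg]; push_cast; ring
    have h4 : (N : ℝ) < g * R := by rw [h3]; linarith
    exact_mod_cast h4
  have hroots : (S.filter (fun u => lev u = 0)).card < R := by
    set Z := (S.filter (fun u => lev u = 0)).card with hZ
    have h1 : (Z : ℝ) * h ≤ n := by
      have h2 : S.card ≤ n := hn ▸ Finset.card_le_univ S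
      exact_mod_cast hlev1.trans h2
    have h3 : (δ : ℝ) / K / 4 ≤ h := by linarith
    have h4 : (Z : ℝ) ≤ 4 * K ^ 2 := by
      by_contra hc
      push Not at hc
      have h5 : 4 * (K : ℝ) ^ 2 * (δ / K / 4) < Z * h := by
        calc _ ≤ 4 * (K : ℝ) ^ 2 * h := mul_le_mul_of_nonneg_left h3 (by positivity)
          _ < _ := mul_lt_mul_of_pos_right hc (by linarith)
      have h6 : 4 * (K : ℝ) ^ 2 * (δ / K / 4) = K * δ := by field_simp
      linarith
    have h7 : 4 * (K : ℝ) ^ 2 < R := by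
      by_contra hc
      push Not at hc
      have h8 : (m : ℝ) * R ≤ m * (4 * K ^ 2) := mul_le_mul_of_nonneg_left hc hm0.le
      have h9 : (m : ℝ) * (4 * K ^ 2) = K ^ 3 / 100 := by rw [hmK]; ring
      linarith
    have : (Z : ℝ) < R := by linarith
    exact_mod_cast this
  have hgKz : (4 : ℤ) * g = K := by rw [hg, hK]; push_cast; ring
  obtain ⟨fS, hfS1, hfS2, hfS3, hfS4⟩ := small_set_finish Nb (fun v => (b v : ℤ)) lev g m S
    hsymm hg0 (by omega) h R N (by rw [hR]; exact Nat.mul_div_le _ _) (fun s _ => hNbL s)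
    hNlt hroots (n * (2 * K + 2)) (fun u _ => by positivity)
    (by
      intro u _
      rw [hgKz]
      have h1 := hb1 u
      have h2 := hwle u
      have h3 := hdn u
      have h4 : (Nb u).card ≤ n := hn ▸ Finset.card_le_univ _
      have h5 : K * (Nb u).card ≤ K * n := Nat.mul_le_mul_left _ h4
      have : b u + K * (Nb u).card ≤ n * (2 * K + 2) := by nlinarith
      exact_mod_cast this)
    (by
      intro a ha0 haA
      obtain ⟨a, rfl⟩ := Int.eq_ofNat_of_zero_le ha0
      have haA' : a ≤ n * (2 * K + 2) := by exact_mod_cast haA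
      apply Nat.le_floor
      refine le_trans ?_ (E4 a haA')
      refine Nat.cast_le.2 (Finset.card_le_card ?_)
      intro u hu
      rw [Finset.mem_filter] at hu ⊢
      refine ⟨hu.1, ?_⟩
      obtain ⟨_, hu1, hu2⟩ := hu
      rw [hgKz] at hu2
      have r1 : (b u : ℝ) - g ≤ a + g * (h + 1) := by
        have := (Int.cast_le (R := ℝ)).2 hu1
        push_cast at this
        linarith
      have r2 : (a : ℝ) ≤ b u + K * (Nb u).card := by exact_mod_cast hu2
      have r3 : (b u : ℝ) ≤ w u + G.degree u := by exact_mod_cast hb1 u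
      have r4 : (w u : ℝ) ≤ b u + K * (Nb u).card := by exact_mod_cast hb2 u
      have r5 := abs_le.1 (hwr u)
      have r6 := hdd u
      have r7 := hNbU u
      have r8 := hdr u
      have r9 : (g : ℝ) * (h + 2) ≤ G.degree u := by
        have s1 : (g : ℝ) * h ≤ K / 4 * (δ / K / 2) := by
          rw [show (g : ℝ) = K / 4 by linarith]
          exact mul_le_mul_of_nonneg_left hh2 (by positivity)
        have s2 : (K : ℝ) / 4 * (δ / K / 2) = δ / 8 := by field_simp; norm_num
        have s3 : (K : ℝ) ≤ δ / 2 := by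
          have s4 : (δ : ℝ) / K ≤ δ := div_le_self hδ0.le (by linarith)
          linarith
        linarith
      have r10 : (0 : ℝ) ≤ G.degree u := by positivity
      constructor <;> linarith)
    hlev2
  -- final weights
  set F : V → V → ℕ := fun u v => if u ∈ S ∧ v ∈ S then 1 + (fS u v).toNat else F0 u v with hF
  have hFsymm : ∀ u v, F u v = F v u := by
    intro u v
    simp only [hF, hfS1 u v, hF0symm u v, and_comm]
  have hfval : ∀ u v, (Sym2.lift ⟨F, hFsymm⟩) s(u, v) = F u v := fun u v => rfl
  have hdB : ∀ v, v ∉ S → weightedDeg G (Sym2.lift ⟨F, hFsymm⟩) v = t v := by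
    intro v hv
    rw [← hJB v hv]
    simp only [weightedDeg, hfval]
    have h1 : ∀ u ∈ G.neighborFinset v, F u v = (1 + hi u v) + (if u ∈ J v then 1 else 0) := by
      intro u _
      have : v ∉ J u := fun h0 => hv (hJmem _ _ h0).1
      simp [hF, hF0, hv, this]
    rw [Finset.sum_congr rfl h1, Finset.sum_add_distrib, Finset.sum_ite_mem,
      Finset.inter_eq_right.2 ((hJsub v).trans (Finset.filter_subset _ _))]
    simp [hw]
  have hdS : ∀ v, v ∈ S → (weightedDeg G (Sym2.lift ⟨F, hFsymm⟩) v : ℤ) =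
      b v + ∑ u ∈ Nb v, fS v u := by
    intro v hv
    simp only [weightedDeg, hfval, hb, hNb]
    push_cast
    rw [Finset.sum_filter, ← Finset.sum_add_distrib]
    apply Finset.sum_congr rfl
    intro u _
    by_cases hu : u ∈ S
    · simp only [hF, hu, hv, and_self, if_true]
      push_cast
      rw [Int.toNat_of_nonneg (hfS2 u v).1, hfS1]
    · simp [hF, hu]
  have hres : ∀ v, v ∈ S → weightedDeg G (Sym2.lift ⟨F, hFsymm⟩) v / g % m < 4 := by
    intro v hv
    have := hfS4 v hv
    rw [← hdS v hv] at this
    exact_mod_cast this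
  refine ⟨Sym2.lift ⟨F, hFsymm⟩, ?_, ?_⟩
  · intro e
    induction e using Sym2.ind with
    | _ u v =>
      intro _
      rw [hfval, Finset.mem_Icc]
      simp only [hF]
      split_ifs
      · have h1 := hfS2 u v
        constructor
        · omega
        · omega
      · have h1 := hF0lo u v
        have h2 := hF0hi u v
        have h3 := hiK u v
        constructor <;> omega
  · intro u v huv
    by_cases hu : u ∈ S <;> by_cases hv : v ∈ S
    · apply hfS3 hu hv
      simp only
      rw [← hdS u hu, ← hdS v hv, huv]
    · have h1 := hres u hu
      rw [huv, hdB v hv] at h1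
      have := (ht v (by simpa using hv)).1
      omega
    · have h1 := hres v hv
      rw [← huv, hdB u hu] at h1
      have := (ht u (by simpa using hu)).1
      omega
    · apply htinj (by simpa using hu) (by simpa using hv)
      rw [← hdB u hu, ← hdB v hv, huv]

/-- Version of `exists_good` for events. -/
lemma exists_good_prop {V A ι : Type*} [Fintype V] [DecidableEq V] [Fintype A] [Nonempty A]
    [Fintype ι] (P : ι → V → A → Prop) (μ : ι → V → ℝ)
    (hμ : ∀ i v, ∃ s : Finset A, (∀ a, P i v a → a ∈ s) ∧
      (s.card : ℝ) ≤ Fintype.card A * μ i v)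
    (T : ι → Finset V) (N : ι → ℝ) (hN : ∀ i, ((T i).card : ℝ) ≤ N i)
    (hNpos : ∀ i, 0 < N i) (L : ℝ) (hL0 : 0 ≤ L) (hL : ∀ i, L ≤ √(N i))
    (hcard : (Fintype.card ι : ℝ) * Real.exp (-(L ^ 2 / 4)) < 1) :
    ∃ ω : V → A, ∀ i, ∀ s : Finset V, (∀ v ∈ s, v ∈ T i ∧ P i v (ω v)) → (s.card : ℝ)
      ≤ ∑ v ∈ T i, μ i v + L * √(N i) := by
  classical
  obtain ⟨ω, hω⟩ := exists_good (fun i v a => if P i v a then (1 : ℝ) else 0) μ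
    (fun i v a => by split_ifs <;> norm_num) (fun i v a => by split_ifs <;> norm_num)
    (fun i v => by
      obtain ⟨s, hs, hs2⟩ := hμ i v
      refine le_trans ?_ hs2
      simp only [Finset.sum_boole]
      refine Nat.cast_le.2 (Finset.card_le_card ?_)
      intro a ha
      exact hs a (Finset.mem_filter.1 ha).2) T N hN hNpos L hL0 hL hcard
  refine ⟨ω, fun i s hs => ?_⟩
  have := hω i
  simp only [Finset.sum_boole] at this
  refine le_trans ?_ this
  refine Nat.cast_le.2 (Finset.card_le_card ?_)
  intro v hv
  exact Finset.mem_filter.2 (hs v hv)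

lemma card_prod_filter {A B : Type*} [Fintype A] [Fintype B] (p : A → Prop) (q : B → Prop)
    [DecidablePred p] [DecidablePred q] :
    (Finset.univ.filter (fun a : A × B => p a.1 ∧ q a.2)).card =
      (Finset.univ.filter p).card * (Finset.univ.filter q).card := by
  rw [← Finset.card_product]
  congr 1
  ext a
  simp

lemma count_interval (n : ℕ) (α β : ℝ) (h : α ≤ β) :
    ((Finset.univ.filter (fun x : Fin n => α ≤ (x : ℕ) ∧ ((x : ℕ) : ℝ) ≤ β)).card : ℝ)
      ≤ β - α + 1 := by
  have h1 : (Finset.univ.filter (fun x : Fin n => α ≤ (x : ℕ) ∧ ((x : ℕ) : ℝ) ≤ β)).card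
      ≤ (Finset.Icc ⌈α⌉ ⌊β⌋).card := by
    apply Finset.card_le_card_of_injOn (fun x : Fin n => ((x : ℕ) : ℤ))
    · intro x hx
      simp only [Finset.coe_filter, Finset.mem_univ, true_and, Set.mem_ofPred_eq] at hx
      simp only [Finset.coe_Icc, Set.mem_Icc]
      exact ⟨Int.ceil_le.2 (by exact_mod_cast hx.1), Int.le_floor.2 (by exact_mod_cast hx.2)⟩
    · intro x _ y _ hxy
      exact Fin.ext (by simpa using hxy)
  rw [Int.card_Icc] at h1
  have h2 : (((⌊β⌋ + 1 - ⌈α⌉).toNat : ℤ) : ℝ) ≤ β - α + 1 := by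
    rw [Int.toNat_eq_max]
    push_cast
    apply max_le
    · have := Int.floor_le β
      have := Int.le_ceil α
      linarith
    · linarith
  calc _ ≤ (((⌊β⌋ + 1 - ⌈α⌉).toNat : ℕ) : ℝ) := by exact_mod_cast h1
    _ ≤ _ := by exact_mod_cast h2

lemma count_scaled (n : ℕ) (hn : 0 < n) (s α β : ℝ) (hs : 0 < s) (h : α ≤ β) :
    ((Finset.univ.filter (fun x : Fin n => α ≤ s * (x : ℕ) / n ∧ s * (x : ℕ) / n ≤ β)).card : ℝ)
      ≤ n * ((β - α) / s) + 1 := by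
  have hn' : (0 : ℝ) < n := by exact_mod_cast hn
  have h1 := count_interval n (α * n / s) (β * n / s) (by gcongr)
  have h2 : (Finset.univ.filter
      (fun x : Fin n => α ≤ s * (x : ℕ) / n ∧ s * (x : ℕ) / n ≤ β)) =
    Finset.univ.filter
      (fun x : Fin n => α * n / s ≤ (x : ℕ) ∧ ((x : ℕ) : ℝ) ≤ β * n / s) := by
    ext x
    simp only [Finset.mem_filter, Finset.mem_univ, true_and]
    rw [div_le_iff₀ hs, le_div_iff₀ hs, div_le_iff₀ hn', le_div_iff₀ hn', mul_comm s]
  rw [h2]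
  refine h1.trans (le_of_eq ?_)
  ring

lemma count_shift (n x : ℕ) (hx : x < n) :
    (Finset.univ.filter (fun y : Fin n => n ≤ (y : ℕ) + x)).card = x := by
  have h1 : (Finset.univ.filter (fun y : Fin n => n ≤ (y : ℕ) + x)).card
      = (Finset.Ico (n - x) n).card := by
    apply Finset.card_bij (fun (y : Fin n) _ => (y : ℕ))
    · intro y hy
      simp only [Finset.mem_filter, Finset.mem_univ, true_and] at hy
      simp only [Finset.mem_Ico]
      exact ⟨by omega, y.2⟩
    · intro y _ z _ h
      exact Fin.ext h
    · intro y hy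
      simp only [Finset.mem_Ico] at hy
      exact ⟨⟨y, hy.2⟩, by simp; omega, rfl⟩
  rw [h1, Nat.card_Ico]; omega

lemma count_compl {A : Type*} [Fintype A] (p : A → Prop) [DecidablePred p] :
    ((Finset.univ.filter (fun a => ¬ p a)).card : ℝ) =
      Fintype.card A - ((Finset.univ.filter p).card : ℝ) := by
  have := Finset.card_filter_add_card_filter_not (s := (Finset.univ : Finset A)) p
  rw [Finset.card_univ] at this
  have h : (((Finset.univ.filter p).card : ℝ) + ((Finset.univ.filter (fun a => ¬ p a)).card : ℝ))
    = Fintype.card A := by exact_mod_cast this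
  linarith

/-- Events used in the probabilistic argument. -/
abbrev Ev (V : Type*) (n R : ℕ) : Type _ :=
  (V × Fin n) ⊕ (V × Fin n) ⊕ V ⊕ V ⊕ (Fin (R + 1) × Fin (R + 1)) ⊕ Fin (R + 1)

set_option maxHeartbeats 1000000 in
lemma probabilistic {V : Type*} [Fintype V] [DecidableEq V] (G : SimpleGraph V)
    [DecidableRel G.Adj]
    (n δ m K g : ℕ) (hn : Fintype.card V = n) (hn0 : 0 < n) (hδ : ∀ v, δ ≤ G.degree v)
    (hm : 10 ≤ m) (hK : K = 400 * m) (hg : g = 100 * m)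
    (hnK : (n : ℝ) + 4000 * δ ≤ K * δ) (L : ℝ) (hL1 : 1 ≤ L)
    (hLδ : 10 ^ 6 * (K : ℝ) ^ 2 * L ≤ √δ)
    (hcard : ((2 * n * n + 2 * n + (n * (2 * K + 2) + 1) * (n * (2 * K + 2) + 1)
      + (n * (2 * K + 2) + 1) : ℕ) : ℝ) * Real.exp (-(L ^ 2 / 4)) < 1) :
    ∃ f : Sym2 V → ℕ, IsIrregularAssignment G (K + 2) f := by
  classical
  set R := n * (2 * K + 2) with hR
  have hK0 : 0 < K := by omega
  have hKr : (4000 : ℝ) ≤ K := by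
    rw [hK]; push_cast
    have : (10 : ℝ) ≤ m := by exact_mod_cast hm
    linarith
  have hKp : (0 : ℝ) < K := by linarith
  have hnp : (0 : ℝ) < n := by exact_mod_cast hn0
  have hLs : L ≤ √δ := by
    refine le_trans ?_ hLδ
    have : (1 : ℝ) ≤ (K : ℝ) ^ 2 := by nlinarith
    nlinarith
  have hsδ : 0 < √(δ : ℝ) := by linarith
  have hδp : (0 : ℝ) < δ := Real.sqrt_pos.1 hsδ
  have hdr : ∀ v, (δ : ℝ) ≤ G.degree v := fun v => by exact_mod_cast hδ v
  have hdp : ∀ v, (0 : ℝ) < G.degree v := fun v => hδp.trans_le (hdr v)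
  have hdn : ∀ v, (G.degree v : ℝ) ≤ n := fun v => by
    have := G.degree_lt_card_verts v
    rw [hn] at this
    exact_mod_cast this.le
  have : NeZero n := ⟨hn0.ne'⟩
  have : NeZero K := ⟨hK0.ne'⟩
  have hV : Nonempty V := Fintype.card_pos_iff.1 (by omega)
  have hδn : (δ : ℝ) ≤ n := (hdr hV.some).trans (hdn _)
  let P : Ev V n R → V → Fin n × Fin K → Prop := fun i u a => match i with
    | .inl (_, x) => n ≤ (a.1 : ℕ) + (x : ℕ)
    | .inr (.inl (_, x)) => ¬ n ≤ (a.1 : ℕ) + (x : ℕ)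
    | .inr (.inr (.inl _)) => a.2 = 0
    | .inr (.inr (.inr (.inl _))) => ¬ a.2 = 0
    | .inr (.inr (.inr (.inr (.inl (b, l))))) =>
        ((b : ℕ) : ℝ) - G.degree u - K * L * √(G.degree u) ≤ K * G.degree u * (a.1 : ℕ) / n ∧
        K * G.degree u * (a.1 : ℕ) / n ≤ ((b : ℕ) : ℝ) + (l : ℕ) - G.degree u
          + K * L * √(G.degree u)
    | .inr (.inr (.inr (.inr (.inr b)))) =>
        (((b : ℕ) : ℝ) - 5 * G.degree u ≤ K * G.degree u * (a.1 : ℕ) / n ∧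
        K * G.degree u * (a.1 : ℕ) / n ≤ ((b : ℕ) : ℝ) + 4 * G.degree u) ∧ a.2 = 0
  let μ : Ev V n R → V → ℝ := fun i u => match i with
    | .inl (_, x) => (x : ℕ) / n
    | .inr (.inl (_, x)) => 1 - (x : ℕ) / n
    | .inr (.inr (.inl _)) => 1 / K
    | .inr (.inr (.inr (.inl _))) => 1 - 1 / K
    | .inr (.inr (.inr (.inr (.inl (_, l))))) =>
        ((l : ℕ) + 2 * K * L * √(G.degree u)) / (K * G.degree u) + 1 / n
    | .inr (.inr (.inr (.inr (.inr _)))) => 9 / K ^ 2 + 1 / (n * K)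
  let T : Ev V n R → Finset V := fun i => match i with
    | .inl (v, _) => G.neighborFinset v
    | .inr (.inl (v, _)) => G.neighborFinset v
    | .inr (.inr (.inl v)) => G.neighborFinset v
    | .inr (.inr (.inr (.inl v))) => G.neighborFinset v
    | .inr (.inr (.inr (.inr _))) => Finset.univ
  let N : Ev V n R → ℝ := fun i => match i with
    | .inl (v, _) => G.degree v
    | .inr (.inl (v, _)) => G.degree v
    | .inr (.inr (.inl v)) => G.degree v
    | .inr (.inr (.inr (.inl v))) => G.degree v
    | .inr (.inr (.inr (.inr _))) => n
  have hcA : (Fintype.card (Fin n × Fin K) : ℝ) = n * K := by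
    simp
  have c1 : ∀ x : Fin n, ((Finset.univ.filter
      (fun a : Fin n × Fin K => n ≤ (a.1 : ℕ) + (x : ℕ))).card : ℝ) = (x : ℕ) * K := by
    intro x
    have := card_prod_filter (fun y : Fin n => n ≤ (y : ℕ) + (x : ℕ)) (fun _ : Fin K => True)
    simp only [and_true] at this
    rw [this, count_shift n x x.2]
    simp
  have c2 : ((Finset.univ.filter
      (fun a : Fin n × Fin K => a.2 = 0)).card : ℝ) = n := by
    have := card_prod_filter (fun _ : Fin n => True) (fun y : Fin K => y = 0)
    simp only [true_and] at this
    rw [this]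
    simp [Finset.filter_eq']
  obtain ⟨ω, hω⟩ := exists_good_prop P μ
    (by
      rintro (⟨v, x⟩ | ⟨v, x⟩ | v | v | ⟨b, l⟩ | b) u
      · refine ⟨Finset.univ.filter
          (fun a : Fin n × Fin K => n ≤ (a.1 : ℕ) + (x : ℕ)),
          fun a ha => Finset.mem_filter.2 ⟨Finset.mem_univ _, ha⟩, ?_⟩
        change _ ≤ (_ : ℝ) * ((x : ℕ) / n)
        rw [c1, hcA]
        apply le_of_eq; field_simp
      · refine ⟨Finset.univ.filter
          (fun a : Fin n × Fin K => ¬ n ≤ (a.1 : ℕ) + (x : ℕ)),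
          fun a ha => Finset.mem_filter.2 ⟨Finset.mem_univ _, ha⟩, ?_⟩
        change _ ≤ (_ : ℝ) * (1 - (x : ℕ) / n)
        rw [count_compl, c1, hcA]
        apply le_of_eq; field_simp
      · refine ⟨Finset.univ.filter
          (fun a : Fin n × Fin K => a.2 = 0),
          fun a ha => Finset.mem_filter.2 ⟨Finset.mem_univ _, ha⟩, ?_⟩
        change _ ≤ (_ : ℝ) * (1 / K)
        rw [c2, hcA]
        apply le_of_eq; field_simp
      · refine ⟨Finset.univ.filter
          (fun a : Fin n × Fin K => ¬ a.2 = 0),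
          fun a ha => Finset.mem_filter.2 ⟨Finset.mem_univ _, ha⟩, ?_⟩
        change _ ≤ (_ : ℝ) * (1 - 1 / K)
        rw [count_compl, c2, hcA]
        apply le_of_eq; field_simp
      · refine ⟨Finset.univ.filter (fun a : Fin n × Fin K =>
          ((b : ℕ) : ℝ) - G.degree u - K * L * √(G.degree u) ≤ K * G.degree u * (a.1 : ℕ) / n ∧
          K * G.degree u * (a.1 : ℕ) / n ≤ ((b : ℕ) : ℝ) + (l : ℕ) - G.degree u
            + K * L * √(G.degree u)),
          fun a ha => Finset.mem_filter.2 ⟨Finset.mem_univ _, ha⟩, ?_⟩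
        change _ ≤ (_ : ℝ) * (((l : ℕ) + 2 * K * L * √(G.degree u)) / (K * G.degree u) + 1 / n)
        have hc := card_prod_filter (fun y : Fin n =>
          ((b : ℕ) : ℝ) - G.degree u - K * L * √(G.degree u) ≤ K * G.degree u * (y : ℕ) / n ∧
          K * G.degree u * (y : ℕ) / n ≤ ((b : ℕ) : ℝ) + (l : ℕ) - G.degree u
            + K * L * √(G.degree u)) (fun _ : Fin K => True)
        simp only [and_true] at hc
        rw [hc, hcA]
        have hd := hdp u
        have hp : 0 ≤ K * L * √(G.degree u) := by positivity
        have := count_scaled n hn0 (K * G.degree u)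
          (((b : ℕ) : ℝ) - G.degree u - K * L * √(G.degree u))
          (((b : ℕ) : ℝ) + (l : ℕ) - G.degree u + K * L * √(G.degree u)) (by positivity)
          (by
            have : (0 : ℝ) ≤ (l : ℕ) := by positivity
            linarith)
        simp only [Finset.filter_true, Finset.card_univ, Fintype.card_fin]
        push_cast
        refine (mul_le_mul_of_nonneg_right this hKp.le).trans (le_of_eq ?_)
        field_simp
        ring
      · refine ⟨Finset.univ.filter (fun a : Fin n × Fin K =>
          (((b : ℕ) : ℝ) - 5 * G.degree u ≤ K * G.degree u * (a.1 : ℕ) / n ∧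
          K * G.degree u * (a.1 : ℕ) / n ≤ ((b : ℕ) : ℝ) + 4 * G.degree u) ∧ a.2 = 0),
          fun a ha => Finset.mem_filter.2 ⟨Finset.mem_univ _, ha⟩, ?_⟩
        change _ ≤ (_ : ℝ) * (9 / K ^ 2 + 1 / (n * K))
        rw [card_prod_filter (fun y : Fin n =>
          (((b : ℕ) : ℝ) - 5 * G.degree u ≤ K * G.degree u * (y : ℕ) / n ∧
          K * G.degree u * (y : ℕ) / n ≤ ((b : ℕ) : ℝ) + 4 * G.degree u))
          (fun z : Fin K => z = 0), hcA]
        have hd := hdp u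
        have := count_scaled n hn0 (K * G.degree u)
          (((b : ℕ) : ℝ) - 5 * G.degree u)
          (((b : ℕ) : ℝ) + 4 * G.degree u) (by positivity)
          (by linarith)
        have h1 : (Finset.univ.filter (fun z : Fin K => z = 0)).card = 1 := by
          simp [Finset.filter_eq']
        rw [h1, mul_one]
        refine this.trans (le_of_eq ?_)
        field_simp
        ring)
    T N
    (by
      rintro (⟨v, x⟩ | ⟨v, x⟩ | v | v | i)
      · exact le_of_eq (congrArg Nat.cast (G.card_neighborFinset_eq_degree v))
      · exact le_of_eq (congrArg Nat.cast (G.card_neighborFinset_eq_degree v))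
      · exact le_of_eq (congrArg Nat.cast (G.card_neighborFinset_eq_degree v))
      · exact le_of_eq (congrArg Nat.cast (G.card_neighborFinset_eq_degree v))
      · exact le_of_eq (congrArg Nat.cast hn))
    (by
      rintro (⟨v, x⟩ | ⟨v, x⟩ | v | v | i)
      · exact hdp v
      · exact hdp v
      · exact hdp v
      · exact hdp v
      · exact hnp)
    L (by linarith)
    (by
      rintro (⟨v, x⟩ | ⟨v, x⟩ | v | v | i)
      · exact hLs.trans (Real.sqrt_le_sqrt (hdr v))
      · exact hLs.trans (Real.sqrt_le_sqrt (hdr v))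
      · exact hLs.trans (Real.sqrt_le_sqrt (hdr v))
      · exact hLs.trans (Real.sqrt_le_sqrt (hdr v))
      · exact hLs.trans (Real.sqrt_le_sqrt hδn))
    (by
      refine lt_of_eq_of_lt ?_ hcard
      congr 2
      simp only [Fintype.card_sum, Fintype.card_prod, Fintype.card_fin, hn]
      ring)
  have hcompl : ∀ (v : V) (p : V → Prop) [DecidablePred p],
      (((G.neighborFinset v).filter (fun u => ¬ p u)).card : ℝ) =
        G.degree v - (((G.neighborFinset v).filter p).card : ℝ) := by
    intro v p _
    have := Finset.card_filter_add_card_filter_not (s := G.neighborFinset v) p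
    rw [G.card_neighborFinset_eq_degree] at this
    have h : ((((G.neighborFinset v).filter p).card : ℝ)
      + (((G.neighborFinset v).filter (fun u => ¬ p u)).card : ℝ))
      = G.degree v := by exact_mod_cast this
    linarith
  have hconst : ∀ (v : V) (r : ℝ), ∑ _u ∈ G.neighborFinset v, r = G.degree v * r := by
    intro v r
    rw [Finset.sum_const, G.card_neighborFinset_eq_degree, nsmul_eq_mul]
  refine assemble G n δ m K g hn hδ hm hK hg hnK L hL1 hLδ (fun v => ((ω v).1 : ℕ))
    (Finset.univ.filter (fun v => (ω v).2 = 0)) ?_ ?_ ?_ ?_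
  · intro v
    have h1 : (((G.neighborFinset v).filter
        (fun u => n ≤ ((ω u).1 : ℕ) + ((ω v).1 : ℕ))).card : ℝ) ≤
        ∑ _u ∈ G.neighborFinset v, (((ω v).1 : ℕ) : ℝ) / n + L * √(G.degree v) := by
      exact hω (.inl (v, (ω v).1)) _ (fun u hu => Finset.mem_filter.1 hu)
    have h2 : (((G.neighborFinset v).filter
        (fun u => ¬ n ≤ ((ω u).1 : ℕ) + ((ω v).1 : ℕ))).card : ℝ) ≤
        ∑ _u ∈ G.neighborFinset v, (1 - (((ω v).1 : ℕ) : ℝ) / n) + L * √(G.degree v) := by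
      exact hω (.inr (.inl (v, (ω v).1))) _ (fun u hu => Finset.mem_filter.1 hu)
    rw [hcompl v, hconst] at h2
    rw [hconst] at h1
    rw [mul_div_assoc, abs_le]
    constructor <;> linarith
  · intro v
    have h1 : (((G.neighborFinset v).filter (fun u => (ω u).2 = 0)).card : ℝ) ≤
        ∑ _u ∈ G.neighborFinset v, (1 : ℝ) / K + L * √(G.degree v) := by
      exact hω (.inr (.inr (.inl v))) _ (fun u hu => Finset.mem_filter.1 hu)
    have h2 : (((G.neighborFinset v).filter (fun u => ¬ (ω u).2 = 0)).card : ℝ) ≤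
        ∑ _u ∈ G.neighborFinset v, (1 - (1 : ℝ) / K) + L * √(G.degree v) := by
      exact hω (.inr (.inr (.inr (.inl v)))) _ (fun u hu => Finset.mem_filter.1 hu)
    rw [hcompl v, hconst] at h2
    rw [hconst] at h1
    simp only [Finset.mem_filter, Finset.mem_univ, true_and]
    have h3 : (G.degree v : ℝ) / K = G.degree v * (1 / K) := by ring
    rw [h3, abs_le]
    constructor <;> linarith
  · intro a c hac hcR
    have h1 : ((Finset.univ.filter (fun u : V =>
        (a : ℝ) - G.degree u - K * L * √(G.degree u) ≤ K * G.degree u * ((ω u).1 : ℕ) / n ∧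
        K * G.degree u * ((ω u).1 : ℕ) / n ≤ (a : ℝ) + ((c - a : ℕ) : ℝ) - G.degree u
          + K * L * √(G.degree u))).card : ℝ) ≤
        ∑ u : V, ((((c - a : ℕ) : ℝ) + 2 * K * L * √(G.degree u)) / (K * G.degree u) + 1 / n)
          + L * √n := by
      exact hω (.inr (.inr (.inr (.inr (.inl (⟨a, by omega⟩, ⟨c - a, by omega⟩)))))) _ (fun u hu => Finset.mem_filter.1 hu)
    have h2 : (a : ℝ) + ((c - a : ℕ) : ℝ) = c := by
      rw [Nat.cast_sub hac]; ring
    simp only [h2] at h1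
    refine h1.trans ?_
    have h3 : ∑ u : V, ((((c - a : ℕ) : ℝ) + 2 * K * L * √(G.degree u)) / (K * G.degree u) + 1 / n)
        ≤ ∑ _u : V, ((c - a : ℝ) / (K * δ) + 2 * L / √δ + 1 / n) := by
      apply Finset.sum_le_sum
      intro u _
      have hd := hdp u
      have hca : (0 : ℝ) ≤ (c : ℝ) - a := by
        have : (a : ℝ) ≤ c := by exact_mod_cast hac
        linarith
      rw [Nat.cast_sub hac, add_div]
      have s1 : ((c : ℝ) - a) / (K * G.degree u) ≤ (c - a) / (K * δ) := by
        have := hdr u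
        gcongr
      have hsd : 0 < √(G.degree u : ℝ) := Real.sqrt_pos.2 hd
      have hsq := Real.mul_self_sqrt hd.le
      have s2 : 2 * K * L * √(G.degree u) / (K * G.degree u) = 2 * L / √(G.degree u) := by
        rw [div_eq_div_iff (by positivity) (by positivity)]
        calc _ = 2 * K * L * (√(G.degree u) * √(G.degree u)) := by ring
          _ = _ := by rw [hsq]; ring
      have s3 : 2 * L / √(G.degree u) ≤ 2 * L / √δ := by
        have := Real.sqrt_le_sqrt (hdr u)
        gcongr
      rw [s2]
      linarith
    rw [Finset.sum_const, Finset.card_univ, hn, nsmul_eq_mul] at h3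
    have h4 : (n : ℝ) * ((c - a : ℝ) / (K * δ) + 2 * L / √δ + 1 / n) =
        n * (c - a) / (K * δ) + 2 * n * L / √δ + 1 := by
      field_simp
    linarith
  · intro a haR
    have h1 : ((Finset.univ.filter (fun u : V =>
        ((a : ℝ) - 5 * G.degree u ≤ K * G.degree u * ((ω u).1 : ℕ) / n ∧
        K * G.degree u * ((ω u).1 : ℕ) / n ≤ (a : ℝ) + 4 * G.degree u) ∧ (ω u).2 = 0)).card : ℝ) ≤
        ∑ _u : V, ((9 : ℝ) / K ^ 2 + 1 / (n * K)) + L * √n := by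
      exact hω (.inr (.inr (.inr (.inr (.inr ⟨a, by omega⟩))))) _ (fun u hu => Finset.mem_filter.1 hu)
    rw [Finset.sum_const, Finset.card_univ, hn, nsmul_eq_mul] at h1
    have h4 : (n : ℝ) * (9 / K ^ 2 + 1 / (n * K)) = 9 * n / K ^ 2 + 1 / K := by
      field_simp
    have h5 : (1 : ℝ) / K ≤ 1 := by
      rw [div_le_one hKp]; linarith
    rw [Finset.filter_filter]
    simp only [and_comm (a := (ω _).2 = 0)]
    linarith

lemma numeric (γ : ℝ) (hγ : 0 < γ) : ∃ D : ℝ, 1 ≤ D ∧ ∀ t : ℝ, D ≤ t →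
    25 * 10 ^ 12 ≤ t ^ γ ∧ 10 ^ 9 * t ^ 6 * Real.exp (-((t ^ γ) ^ 2 / 4)) < 1 := by
  have h1 : Filter.Tendsto (fun t : ℝ => t ^ γ) Filter.atTop Filter.atTop :=
    tendsto_rpow_atTop hγ
  have h2 : Filter.Tendsto (fun t : ℝ => t ^ (2 * γ)) Filter.atTop Filter.atTop :=
    tendsto_rpow_atTop (by linarith)
  have h3 := (tendsto_rpow_mul_exp_neg_mul_atTop_nhds_zero (3 / γ) (1 / 4) (by norm_num)).comp h2
  have h4 := h3.eventually (gt_mem_nhds (show (0 : ℝ) < 1 / 10 ^ 9 by norm_num))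
  obtain ⟨D, hD⟩ := Filter.eventually_atTop.1
    ((h1.eventually_ge_atTop (25 * 10 ^ 12)).and h4)
  refine ⟨max D 1, le_max_right _ _, fun t ht => ?_⟩
  have ht1 : 1 ≤ t := (le_max_right _ _).trans ht
  have ht0 : 0 ≤ t := by linarith
  obtain ⟨e1, e2⟩ := hD t ((le_max_left _ _).trans ht)
  refine ⟨e1, ?_⟩
  simp only [Function.comp] at e2
  rw [← Real.rpow_mul ht0, show 2 * γ * (3 / γ) = ((6 : ℕ) : ℝ) by
    field_simp; norm_num, Real.rpow_natCast] at e2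
  have h5 : -((t ^ γ) ^ 2 / 4) = -(1 / 4) * t ^ (2 * γ) := by
    rw [mul_comm 2 γ, Real.rpow_mul ht0, Real.rpow_two]; ring
  rw [h5, mul_assoc]
  rw [lt_div_iff₀ (by norm_num)] at e2
  linarith

lemma small_case {V : Type*} [Fintype V] (G : SimpleGraph V)
    [DecidableRel G.Adj] (n : ℕ) (hn : Fintype.card V = n) (hδ : ∀ v, 2 ≤ G.degree v) :
    ∃ f : Sym2 V → ℕ, IsIrregularAssignment G (2 ^ (n * n)) f := by
  classical
  set e := Fintype.equivFin (Sym2 V)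
  have hc : Fintype.card (Sym2 V) ≤ n * n := by
    rw [← hn, ← Fintype.card_prod]
    exact Fintype.card_le_of_surjective (fun p : V × V => s(p.1, p.2))
      (fun z => by induction z with | _ x y => exact ⟨(x, y), rfl⟩)
  refine ⟨fun z => 2 ^ (e z : ℕ), ?_, ?_⟩
  · intro z _
    rw [Finset.mem_Icc]
    exact ⟨Nat.one_le_two_pow, Nat.pow_le_pow_right (by norm_num) ((e z).2.le.trans hc)⟩
  · have hw : ∀ v, weightedDeg G (fun z => 2 ^ (e z : ℕ)) v =
        ∑ i ∈ (G.neighborFinset v).image (fun u => (e s(u, v) : ℕ)), 2 ^ i := by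
      intro v
      rw [Finset.sum_image]
      · rfl
      · intro x _ y _ hxy
        have := e.injective (Fin.ext hxy)
        exact Sym2.congr_left.1 this
    intro u v huv
    rw [hw, hw] at huv
    have h1 := Finset.geomSum_injective le_rfl huv
    by_contra hne
    have h2 : ∀ x, G.Adj u x → x = v := by
      intro x hx
      have h3 : (e s(x, u) : ℕ) ∈
          (G.neighborFinset v).image (fun y => (e s(y, v) : ℕ)) := by
        rw [← h1]
        exact Finset.mem_image_of_mem (fun y => (e s(y, u) : ℕ)) ((G.mem_neighborFinset u x).2 hx)
      obtain ⟨y, _, hy⟩ := Finset.mem_image.1 h3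
      have h4 := e.injective (Fin.ext hy)
      rw [Sym2.eq_iff] at h4
      rcases h4 with ⟨_, h⟩ | ⟨_, h⟩
      · exact absurd h.symm hne
      · exact h.symm
    have h5 : G.degree u ≤ 1 := by
      rw [← G.card_neighborFinset_eq_degree, Finset.card_le_one]
      intro a ha b hb
      rw [h2 a ((G.mem_neighborFinset u a).1 ha), h2 b ((G.mem_neighborFinset u b).1 hb)]
    have := hδ u
    omega

lemma strength_le {V : Type*} [Fintype V] (G : SimpleGraph V)
    [DecidableRel G.Adj] (k : ℕ) (hk : 1 ≤ k)
    (h : ∃ f : Sym2 V → ℕ, IsIrregularAssignment G k f) :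
    ∃ s : ℕ, irregularityStrength G = (s : ℕ∞) ∧ s ≤ k := by
  have h1 : irregularityStrength G ≤ (k : ℕ∞) := iInf_le_of_le k (iInf_le_of_le hk (iInf_le _ h))
  have h2 : irregularityStrength G ≠ ⊤ := ne_top_of_le_ne_top (ENat.natCast_ne_top k) h1
  obtain ⟨s, hs⟩ := ENat.ne_top_iff_exists.1 h2
  refine ⟨s, hs.symm, ?_⟩
  rw [← hs] at h1
  exact_mod_cast h1

lemma large_case {V : Type*} [Fintype V] (G : SimpleGraph V)
    [DecidableRel G.Adj] (n δ : ℕ) (hn : Fintype.card V = n) (hn0 : 0 < n)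
    (hδ : ∀ v, δ ≤ G.degree v) (ε : ℝ) (hε : 0 < ε) (hε2 : ε < 1 / 4)
    (hd1 : 1 ≤ δ) (hnδ : (n : ℝ) ≤ (δ : ℝ) ^ (1 + ε))
    (h1 : 25 * 10 ^ 12 ≤ (δ : ℝ) ^ (1 / 4 - ε))
    (h2 : 10 ^ 9 * (δ : ℝ) ^ 6 * Real.exp (-(((δ : ℝ) ^ (1 / 4 - ε)) ^ 2 / 4)) < 1) :
    ∃ k : ℕ, 1 ≤ k ∧ (k : ℝ) ≤ n / δ + 4402 ∧
      ∃ f : Sym2 V → ℕ, IsIrregularAssignment G k f := by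
  classical
  have ht1 : (1 : ℝ) ≤ δ := by exact_mod_cast hd1
  have ht0 : (0 : ℝ) < δ := by linarith
  set t : ℝ := (δ : ℝ) with ht
  set m : ℕ := ⌈(n : ℝ) / t / 400⌉₊ + 10 with hm
  have hq0 : 0 ≤ (n : ℝ) / t / 400 := by positivity
  have hm1 : (n : ℝ) / t / 400 + 10 ≤ m := by
    rw [hm]; push_cast; have := Nat.le_ceil ((n : ℝ) / t / 400); linarith
  have hm2 : (m : ℝ) ≤ (n : ℝ) / t / 400 + 11 := by
    rw [hm]; push_cast; have := Nat.ceil_lt_add_one hq0; linarith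
  set K : ℕ := 400 * m with hK
  have hKr : (K : ℝ) = 400 * m := by rw [hK]; push_cast; ring
  have hK1 : (n : ℝ) / t + 4000 ≤ K := by rw [hKr]; linarith
  have hK2 : (K : ℝ) ≤ n / t + 4400 := by rw [hKr]; linarith
  have hqe : (n : ℝ) / t ≤ t ^ ε := by
    rw [div_le_iff₀ ht0]
    rw [Real.rpow_add ht0, Real.rpow_one] at hnδ
    linarith
  have hte1 : 1 ≤ t ^ ε := Real.one_le_rpow ht1 hε.le
  have hte2 : t ^ ε ≤ t := by
    calc t ^ ε ≤ t ^ (1 : ℝ) := Real.rpow_le_rpow_of_exponent_le ht1 (by linarith)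
      _ = t := Real.rpow_one t
  have hK3 : (K : ℝ) ≤ 5000 * t ^ ε := by linarith
  have hK0 : (0 : ℝ) ≤ K := by positivity
  set L : ℝ := t ^ (1 / 4 - ε) with hL
  have hL1 : 1 ≤ L := by linarith
  refine ⟨K + 2, by omega, by push_cast; linarith, ?_⟩
  refine probabilistic G n δ m K (100 * m) hn hn0 hδ (by omega) hK rfl ?_ L hL1 ?_ ?_
  · have := mul_le_mul_of_nonneg_right hK1 ht0.le
    rw [add_mul, div_mul_cancel₀ _ ht0.ne'] at this
    exact this
  · have hs : √t = (t ^ ε) ^ 2 * L * L := by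
      rw [Real.sqrt_eq_rpow, ← Real.rpow_natCast, ← Real.rpow_mul ht0.le, hL, mul_assoc,
        ← Real.rpow_add ht0, ← Real.rpow_add ht0]
      congr 1; push_cast; ring
    rw [hs]
    have hKs : (K : ℝ) ^ 2 ≤ (5000 * t ^ ε) ^ 2 := by gcongr
    calc 10 ^ 6 * (K : ℝ) ^ 2 * L ≤ 10 ^ 6 * (5000 * t ^ ε) ^ 2 * L := by gcongr
      _ = (t ^ ε) ^ 2 * L * (25 * 10 ^ 12) := by ring
      _ ≤ _ := by gcongr
  · refine lt_of_le_of_lt ?_ h2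
    refine mul_le_mul_of_nonneg_right ?_ (Real.exp_pos _).le
    push_cast
    have hn2 : (n : ℝ) ≤ t ^ 2 := by
      rw [div_le_iff₀ ht0] at hqe
      calc (n : ℝ) ≤ t ^ ε * t := hqe
        _ ≤ t * t := mul_le_mul_of_nonneg_right hte2 ht0.le
        _ = t ^ 2 := by ring
    have hK4 : (K : ℝ) ≤ 5000 * t := by linarith
    have e1 : (1 : ℝ) ≤ t ^ 2 := one_le_pow₀ ht1
    have e2 : t ^ 2 ≤ t ^ 3 := pow_le_pow_right₀ ht1 (by norm_num)
    have e3 : t ^ 3 ≤ t ^ 6 := pow_le_pow_right₀ ht1 (by norm_num)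
    have e4 : t ^ 4 ≤ t ^ 6 := pow_le_pow_right₀ ht1 (by norm_num)
    have hR : (n : ℝ) * (2 * K + 2) + 1 ≤ 10003 * t ^ 3 := by
      calc (n : ℝ) * (2 * K + 2) + 1 ≤ t ^ 2 * (2 * (5000 * t) + 2) + 1 := by gcongr
        _ = 10000 * t ^ 3 + 2 * t ^ 2 + 1 := by ring
        _ ≤ _ := by linarith
    have hR0 : (0 : ℝ) ≤ (n : ℝ) * (2 * K + 2) + 1 := by positivity
    have hRR : ((n : ℝ) * (2 * K + 2) + 1) * ((n : ℝ) * (2 * K + 2) + 1) ≤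
        10003 * t ^ 3 * (10003 * t ^ 3) := mul_le_mul hR hR hR0 (by positivity)
    have hRR2 : 10003 * t ^ 3 * (10003 * t ^ 3) = 10003 ^ 2 * t ^ 6 := by ring
    have hnn : (n : ℝ) * n ≤ t ^ 4 := by
      calc (n : ℝ) * n ≤ t ^ 2 * t ^ 2 := by gcongr
        _ = _ := by ring
    have e5 : 0 ≤ t ^ 6 := by positivity
    rw [hRR2] at hRR
    rw [mul_assoc 2 (n : ℝ) n]
    clear h2 h1
    linarith

/-- Faudree–Lehel conjecture for dense graphs: for every `ε ∈ (0, 0.25)` there is an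
absolute constant `C` such that every graph `G` on `n` vertices with minimum degree
`δ ≥ 1` satisfying `δ^(1+ε) ≥ n` satisfies `s(G) ≤ n/δ + C`. -/
theorem faudree_lehel_dense :
    ∀ ε : ℝ, ε ∈ Set.Ioo (0 : ℝ) 0.25 →
    ∃ C : ℝ, ∀ (V : Type) [Fintype V] (G : SimpleGraph V) [DecidableRel G.Adj]
      (n δ : ℕ), Fintype.card V = n → G.minDegree = δ → 1 ≤ δ →
      (n : ℝ) ≤ (δ : ℝ) ^ (1 + ε) →
      ∃ s : ℕ, irregularityStrength G = (s : ℕ∞) ∧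
        (s : ℝ) ≤ (n : ℝ) / (δ : ℝ) + C := by
  intro ε hε
  obtain ⟨hε0, hε1⟩ := hε
  have hε2 : ε < 1 / 4 := by norm_num at hε1 ⊢; linarith
  obtain ⟨D, hD1, hD⟩ := numeric (1 / 4 - ε) (by linarith)
  set M : ℕ := ⌈D ^ (2 : ℝ)⌉₊ with hM
  refine ⟨max 4402 (2 ^ (M * M) : ℕ), ?_⟩
  intro V _ G _ n δ hn hmin hδ1 hnδ
  have hdeg : ∀ v, δ ≤ G.degree v := fun v => hmin ▸ G.minDegree_le_degree v
  have hV : Nonempty V := by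
    by_contra hcon
    rw [not_nonempty_iff] at hcon
    have : G.minDegree = 0 := by simp
    omega
  have hn0 : 0 < n := hn ▸ Fintype.card_pos
  have hδn : δ < n := by
    have h1 := hdeg hV.some
    have h2 := G.degree_lt_card_verts hV.some
    omega
  have hδr : (1 : ℝ) ≤ δ := by exact_mod_cast hδ1
  by_cases hc : D ≤ δ
  · obtain ⟨h1, h2⟩ := hD δ hc
    obtain ⟨k, hk1, hk2, hk3⟩ := large_case G n δ hn hn0 hdeg ε hε0 hε2 hδ1 hnδ h1 h2
    obtain ⟨s, hs1, hs2⟩ := strength_le G k hk1 hk3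
    refine ⟨s, hs1, ?_⟩
    have h3 : (s : ℝ) ≤ k := by exact_mod_cast hs2
    have := le_max_left (4402 : ℝ) ((2 ^ (M * M) : ℕ) : ℝ)
    linarith
  · push Not at hc
    have hδ2 : 2 ≤ δ := by
      by_contra hcon
      have h1 : δ = 1 := by omega
      rw [h1] at hnδ
      simp only [Nat.cast_one, Real.one_rpow] at hnδ
      have : n ≤ 1 := by exact_mod_cast hnδ
      omega
    have hnM : n ≤ M := by
      have h1 : (n : ℝ) ≤ D ^ (2 : ℝ) := by
        calc (n : ℝ) ≤ (δ : ℝ) ^ (1 + ε) := hnδ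
          _ ≤ (δ : ℝ) ^ (2 : ℝ) := Real.rpow_le_rpow_of_exponent_le hδr (by linarith)
          _ ≤ D ^ (2 : ℝ) := Real.rpow_le_rpow (by linarith) hc.le (by norm_num)
      have h2 := h1.trans (Nat.le_ceil _)
      exact (Nat.cast_le (α := ℝ)).1 h2
    obtain ⟨s, hs1, hs2⟩ := strength_le G (2 ^ (n * n)) Nat.one_le_two_pow
      (small_case G n hn (fun v => hδ2.trans (hdeg v)))
    refine ⟨s, hs1, ?_⟩
    have h3 : s ≤ 2 ^ (M * M) :=
      hs2.trans (Nat.pow_le_pow_right (by norm_num) (Nat.mul_le_mul hnM hnM))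
    have h4 : (s : ℝ) ≤ ((2 ^ (M * M) : ℕ) : ℝ) := by exact_mod_cast h3
    have h5 := le_max_right (4402 : ℝ) ((2 ^ (M * M) : ℕ) : ℝ)
    have h6 : (0 : ℝ) ≤ (n : ℝ) / δ := by positivity
    linarith

end FL
end
end

section
/- Let p be a positive integer and let I_i = [a_i, b_i) ⊆ ℤ, 1 ≤ i ≤ p, be integer intervals (a_i, b_i ∈ ℤ, a_i ≤ b_i) with a_1 ≤ a_2 ≤ … ≤ a_p. Then there exist pairwise disjoint integer intervals I_i' = [a_i', b_i') with b_i' − a_i' = b_i − a_i for each i, with a_1' = a_1 and a_1' ≤ a_2' ≤ … ≤ a_p', such that max_{1 ≤ i ≤ p} |a_i' − a_i| ≤ max(0, max_{1 ≤ l₁ ≤ l₂ ≤ p−1} Σ_{i=l₁}^{l₂} ((b_i − a_i) − (a_{i+1} − a_i))), where the inner maximum over an empty index range is taken as 0. -/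
/-- The greedy shift of the `n`-th interval. -/
def greedyShift (a b : ℕ → ℤ) : ℕ → ℤ
  | 0 => 0
  | n + 1 => if n = 0 then 0 else max 0 (greedyShift a b n + ((b n - a n) - (a (n + 1) - a n)))

theorem greedyShift_eq (a b : ℕ → ℤ) (n : ℕ) :
    greedyShift a b (n + 1) = 0 ∨ ∃ l, 1 ≤ l ∧ l ≤ n ∧
      greedyShift a b (n + 1) = ∑ i ∈ Finset.Icc l n, ((b i - a i) - (a (i + 1) - a i)) := by
  induction n with
  | zero => left; simp [greedyShift]
  | succ n ih =>
    have h : greedyShift a b (n + 1 + 1) = max 0 (greedyShift a b (n + 1) +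
        ((b (n + 1) - a (n + 1)) - (a (n + 1 + 1) - a (n + 1)))) := by
      rw [greedyShift, if_neg (Nat.succ_ne_zero n)]
    rw [h]
    rcases max_choice 0 (greedyShift a b (n + 1) +
        ((b (n + 1) - a (n + 1)) - (a (n + 1 + 1) - a (n + 1)))) with h1 | h1
    · left; exact h1
    · right
      rw [h1]
      rcases ih with h0 | ⟨l, hl, hln, hs⟩
      · exact ⟨n + 1, by omega, le_rfl, by rw [h0]; simp⟩
      · refine ⟨l, hl, by omega, ?_⟩
        rw [Finset.sum_Icc_succ_top (by omega), hs]

theorem greedyShift_nonneg (a b : ℕ → ℤ) (n : ℕ) : 0 ≤ greedyShift a b n := by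
  cases n with
  | zero => simp [greedyShift]
  | succ n =>
    rw [greedyShift]
    split_ifs
    · exact le_rfl
    · exact le_max_left _ _

theorem greedyShift_step (a b : ℕ → ℤ) (n : ℕ) (hn : 1 ≤ n) :
    greedyShift a b n + b n ≤ greedyShift a b (n + 1) + a (n + 1) := by
  rw [greedyShift.eq_2, if_neg (by omega)]
  have := le_max_right 0 (greedyShift a b n + ((b n - a n) - (a (n + 1) - a n)))
  linarith

/-- Interval-shifting lemma: given `p` integer intervals `[a_i, b_i)`, `1 ≤ i ≤ p`, with
`a_1 ≤ a_2 ≤ … ≤ a_p`, they may be translated to pairwise disjoint intervals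
`[a_i', b_i')` of the same lengths, with `a_1' = a_1` and `a_1' ≤ a_2' ≤ … ≤ a_p'`,
so that every shift `|a_i' - a_i|` is at most
`max(0, max_{1 ≤ l₁ ≤ l₂ ≤ p-1} Σ_{i=l₁}^{l₂} ((b_i - a_i) - (a_{i+1} - a_i)))`;
the latter is expressed by quantifying over all upper bounds `M` of these quantities. -/
theorem interval_shift (p : ℕ) (hp : 1 ≤ p) (a b : ℕ → ℤ)
    (hab : ∀ i, 1 ≤ i → i ≤ p → a i ≤ b i)
    (hmono : ∀ i j, 1 ≤ i → i ≤ j → j ≤ p → a i ≤ a j) :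
    ∃ a' b' : ℕ → ℤ,
      (∀ i, 1 ≤ i → i ≤ p → b' i - a' i = b i - a i) ∧
      a' 1 = a 1 ∧
      (∀ i j, 1 ≤ i → i ≤ j → j ≤ p → a' i ≤ a' j) ∧
      (∀ i j, 1 ≤ i → i < j → j ≤ p →
        Disjoint (Set.Ico (a' i) (b' i)) (Set.Ico (a' j) (b' j))) ∧
      (∀ M : ℤ, 0 ≤ M →
        (∀ l₁ l₂, 1 ≤ l₁ → l₁ ≤ l₂ → l₂ ≤ p - 1 →
          ∑ i ∈ Finset.Icc l₁ l₂, ((b i - a i) - (a (i + 1) - a i)) ≤ M) →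
        ∀ i, 1 ≤ i → i ≤ p → |a' i - a i| ≤ M) := by
  have key : ∀ i j, 1 ≤ i → i < j → j ≤ p →
      greedyShift a b i + b i ≤ greedyShift a b j + a j := by
    intro i j hi hij
    induction j, hij using Nat.le_induction with
    | base => intro _; exact greedyShift_step a b i hi
    | succ j hj ih =>
      intro hp'
      have h1 := ih (by omega)
      have h2 := greedyShift_step a b j (by omega)
      have h3 := hab j (by omega) (by omega)
      linarith
  refine ⟨fun i => greedyShift a b i + a i, fun i => greedyShift a b i + b i, ?_, ?_, ?_, ?_, ?_⟩
  · intro i _ _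
    dsimp only
    ring
  · simp [greedyShift]
  · intro i j hi hij hj
    rcases hij.eq_or_lt with rfl | h
    · exact le_rfl
    · have h1 := key i j hi h hj
      have h2 := hab i hi (by omega)
      dsimp only
      linarith
  · intro i j hi hij hj
    rw [Set.disjoint_left]
    intro x hx hy
    have h1 := key i j hi hij hj
    have h2 := hx.2
    have h3 := hy.1
    dsimp only at h2 h3
    linarith
  · intro M hM h i hi hip
    dsimp only
    rw [add_sub_cancel_right, abs_of_nonneg (greedyShift_nonneg a b i)]
    obtain ⟨n, rfl⟩ : ∃ n, i = n + 1 := ⟨i - 1, by omega⟩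
    rcases greedyShift_eq a b n with h0 | ⟨l, hl, hln, hs⟩
    · rw [h0]; exact hM
    · rw [hs]; exact h l n hl hln (by omega)
end

section
/- Let k ≥ 2 be an integer, let H be a finite simple graph in which every vertex has degree at least k + 6, let w₀ : E(H) → ℤ be any initial edge weighting, and let a : V(H) → ℤ be any function. Then there exists an edge weighting w : E(H) → ℤ with |w(e) − w₀(e)| ≤ 2 for every edge e, such that for every vertex v the weighted degree Σ_{e incident to v} w(e) is congruent to a(v) or to a(v)+1 modulo k. -/
/-- Signed subset sums of a finset with signs `±1` fill an interval. -/
theorem signed_subset_interval {V : Type*} [DecidableEq V] (σ : V → ℤ)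
    (hσ : ∀ u, σ u = 1 ∨ σ u = -1) (N : Finset V) :
    ∃ lo : ℤ, ∀ x : ℤ, lo ≤ x → x ≤ lo + N.card → ∃ T ⊆ N, ∑ u ∈ T, σ u = x := by
  induction N using Finset.induction_on with
  | empty => exact ⟨0, fun x h1 h2 => ⟨∅, by simp, by simp at h2 ⊢; omega⟩⟩
  | insert v N hv ih =>
    obtain ⟨lo, h⟩ := ih
    rw [Finset.card_insert_of_notMem hv]
    have key : ∀ x : ℤ, lo ≤ x - σ v → x - σ v ≤ lo + N.card →
        ∃ T ⊆ insert v N, ∑ u ∈ T, σ u = x := by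
      intro x h1 h2
      obtain ⟨T, hT, hs⟩ := h _ h1 h2
      refine ⟨insert v T, Finset.insert_subset_insert _ hT, ?_⟩
      rw [Finset.sum_insert (fun hvT => hv (hT hvT)), hs]
      ring
    have key2 : ∀ x : ℤ, lo ≤ x → x ≤ lo + N.card →
        ∃ T ⊆ insert v N, ∑ u ∈ T, σ u = x := by
      intro x h1 h2
      obtain ⟨T, hT, hs⟩ := h _ h1 h2
      exact ⟨T, hT.trans (Finset.subset_insert _ _), hs⟩
    rcases hσ v with hs | hs
    · refine ⟨lo, fun x h1 h2 => ?_⟩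
      push_cast at h2
      by_cases hx : x ≤ lo + N.card
      · exact key2 x h1 hx
      · exact key x (by omega) (by omega)
    · refine ⟨lo - 1, fun x h1 h2 => ?_⟩
      push_cast at h2
      by_cases hx : lo ≤ x
      · exact key2 x hx (by omega)
      · exact key x (by omega) (by omega)

theorem signed_subset_mod {V : Type*} [DecidableEq V] (σ : V → ℤ)
    (hσ : ∀ u, σ u = 1 ∨ σ u = -1) (N : Finset V) (k : ℕ) (hk : 0 < k) (hN : k ≤ N.card)
    (t : ℤ) : ∃ T ⊆ N, ∑ u ∈ T, σ u ≡ t [ZMOD (k : ℤ)] := by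
  obtain ⟨lo, h⟩ := signed_subset_interval σ hσ N
  have h1 := Int.emod_nonneg (t - lo) (b := (k : ℤ)) (by omega)
  have h2 := Int.emod_lt_of_pos (t - lo) (b := (k : ℤ)) (by omega)
  obtain ⟨T, hT, hs⟩ := h (lo + (t - lo) % k) (by omega) (by omega)
  refine ⟨T, hT, ?_⟩
  rw [hs]
  have := (Int.mod_modEq (t - lo) k).add_left lo
  simpa using this

/-- Residue-adjustment lemma (Step C-1): if every vertex of a finite simple graph `H`
has degree at least `k + 6` (`k ≥ 2`), then any initial edge weighting `w₀ : E(H) → ℤ`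
can be modified by at most `2` on every edge so that, for a prescribed `a : V(H) → ℤ`,
the weighted degree of every vertex `v` is congruent to `a v` or `a v + 1` modulo `k`. -/
theorem residue_adjustment {V : Type*} [Fintype V] (k : ℕ) (hk : 2 ≤ k)
    (H : SimpleGraph V) [DecidableRel H.Adj]
    (hdeg : ∀ v : V, k + 6 ≤ H.degree v)
    (w₀ : Sym2 V → ℤ) (a : V → ℤ) :
    ∃ w : Sym2 V → ℤ,
      (∀ e ∈ H.edgeSet, |w e - w₀ e| ≤ 2) ∧
      (∀ v : V,
        (∑ u ∈ H.neighborFinset v, w s(u, v)) ≡ a v [ZMOD (k : ℤ)] ∨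
        (∑ u ∈ H.neighborFinset v, w s(u, v)) ≡ a v + 1 [ZMOD (k : ℤ)]) := by
  classical
  have main : ∀ S : Finset V, ∃ w : Sym2 V → ℤ,
      (∀ x y, |w s(x, y) - w₀ s(x, y)| ≤
        (if x ∈ S then 1 else 0) + (if y ∈ S then 1 else 0)) ∧
      (∀ v ∈ S,
        (∑ u ∈ H.neighborFinset v, w s(u, v)) ≡ a v [ZMOD (k : ℤ)] ∨
        (∑ u ∈ H.neighborFinset v, w s(u, v)) ≡ a v + 1 [ZMOD (k : ℤ)]) := by
    intro S
    induction S using Finset.induction_on with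
    | empty => exact ⟨w₀, by simp, by simp⟩
    | insert v S hv ih =>
      obtain ⟨w, hb, hr⟩ := ih
      let σ : V → ℤ := fun x =>
        if (∑ u ∈ H.neighborFinset x, w s(u, x)) ≡ a x [ZMOD (k : ℤ)] then 1 else -1
      have hσ : ∀ u, σ u = 1 ∨ σ u = -1 := by
        intro u
        by_cases h : (∑ z ∈ H.neighborFinset u, w s(z, u)) ≡ a u [ZMOD (k : ℤ)]
        · left; exact if_pos h
        · right; exact if_neg h
      have hd := hdeg v
      obtain ⟨T, hT, hs⟩ := signed_subset_mod σ hσ (H.neighborFinset v) k (by omega)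
        (by rw [H.card_neighborFinset_eq_degree]; omega)
        (a v - ∑ u ∈ H.neighborFinset v, w s(u, v))
      have hvT : v ∉ T := fun h => by simpa using hT h
      let D : Sym2 V → ℤ := fun e => ∑ u ∈ T, if e = s(u, v) then σ u else 0
      have hD1 : ∀ x, D s(x, v) = if x ∈ T then σ x else 0 := by
        intro x
        have h : ∀ u, (s(x, v) = s(u, v)) = (x = u) := fun u =>
          propext ⟨fun h => Sym2.congr_left.1 h, fun h => by rw [h]⟩
        simp only [D, h]
        rw [Finset.sum_ite_eq]
      have hD2 : ∀ x y, x ≠ v → y ≠ v → D s(x, y) = 0 := by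
        intro x y hx hy
        refine Finset.sum_eq_zero fun u _ => if_neg ?_
        intro h
        have : v ∈ s(x, y) := h ▸ Sym2.mem_mk_right u v
        rcases Sym2.mem_iff.1 this with h | h
        · exact hx h.symm
        · exact hy h.symm
      have hDb : ∀ x, |D s(x, v)| ≤ 1 := by
        intro x
        rw [hD1]
        split_ifs
        · rcases hσ x with h | h <;> simp [h]
        · simp
      have hDv : D s(v, v) = 0 := by rw [hD1, if_neg hvT]
      refine ⟨fun e => w e + D e, ?_, ?_⟩
      · have hbv : ∀ x, x ≠ v → |w s(x, v) + D s(x, v) - w₀ s(x, v)| ≤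
            (if x ∈ S then 1 else 0) + 1 := by
          intro x hx
          have h1 := hb x v
          have h2 := hDb x
          rw [if_neg hv] at h1
          rw [abs_le] at *
          constructor <;> linarith [h1.1, h1.2, h2.1, h2.2]
        intro x y
        by_cases hx : x = v
        · subst hx
          by_cases hy : y = x
          · subst hy
            have := hb y y
            simp only [hDv, add_zero, Finset.mem_insert_self, if_true]
            rw [if_neg hv] at this
            linarith
          · have := hbv y hy
            simp only [Sym2.eq_swap (a := x) (b := y), Finset.mem_insert, hy, true_or,
              if_true, false_or]
            linarith
        · by_cases hy : y = v
          · subst hy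
            simpa [hx] using hbv x hx
          · simpa [hx, hy, hD2 x y hx hy] using hb x y
      · intro x hxS
        by_cases hx : x = v
        · subst hx
          left
          have e : ∑ u ∈ H.neighborFinset x, (w s(u, x) + D s(u, x)) =
              ∑ u ∈ H.neighborFinset x, w s(u, x) + ∑ u ∈ T, σ u := by
            rw [Finset.sum_add_distrib]
            congr 1
            simp_rw [hD1]
            rw [← Finset.sum_filter, Finset.filter_mem_eq_inter,
              Finset.inter_eq_right.2 hT]
          simp only [e]
          simpa using hs.add_left (∑ u ∈ H.neighborFinset x, w s(u, x))
        · have hxS' : x ∈ S := by simpa [hx] using hxS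
          have e : ∑ u ∈ H.neighborFinset x, (w s(u, x) + D s(u, x)) =
              ∑ u ∈ H.neighborFinset x, w s(u, x) + if x ∈ T then σ x else 0 := by
            rw [Finset.sum_add_distrib]
            congr 1
            rw [Finset.sum_eq_single v]
            · rw [Sym2.eq_swap, hD1]
            · intro u _ hu
              exact hD2 u x hu hx
            · intro hvx
              rw [Sym2.eq_swap, hD1, if_neg]
              intro hxT
              have := hT hxT
              simp only [SimpleGraph.mem_neighborFinset] at this hvx
              exact hvx this.symm
          simp only [e]
          by_cases hxT : x ∈ T
          · rw [if_pos hxT]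
            by_cases h : (∑ u ∈ H.neighborFinset x, w s(u, x)) ≡ a x [ZMOD (k : ℤ)]
            · right
              have : σ x = 1 := if_pos h
              rw [this]
              exact h.add_right 1
            · left
              have : σ x = -1 := if_neg h
              rw [this]
              have h' := ((hr x hxS').resolve_left h).add_right (-1)
              simpa using h'
          · simpa [hxT] using hr x hxS'
  obtain ⟨w, hb, hr⟩ := main Finset.univ
  refine ⟨w, ?_, fun v => hr v (Finset.mem_univ v)⟩
  intro e _
  induction e with
  | h x y => simpa using hb x y
end

section
/- There is a constant c depending only on ε such that the following holds whenever δ ≥ c and n ≥ c·δ: for every integer 1 ≤ q ≤ k' and all integers d_v, d_u ≥ δ, there is at most one integer p with 1 ≤ p ≤ k' for which both (⌈⌈n/δ⌉/(3k')⌉·(k'+q) + (13n/δ^(1+ε) + 4))·d_v > (⌈⌈n/δ⌉/(3k')⌉·(k'+p) − (13n/δ^(1+ε) + 4))·d_u and (⌈⌈n/δ⌉/(3k')⌉·(k'+q) − (13n/δ^(1+ε) + 4))·d_v < (⌈⌈n/δ⌉/(3k')⌉·(k'+p) + (13n/δ^(1+ε) + 4))·d_u hold. -/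
open MeasureTheory ProbabilityTheory
open scoped ENNReal

noncomputable section

namespace FL

/-- Index of the bin containing a value `x ∈ [0,1]` among `δ` equal bins `B_1, …, B_δ`. -/
def binOf (δ : ℕ) (x : ℝ) : ℕ := min δ (⌊x * δ⌋₊ + 1)

variable {V : Type*} {Ω : Type*}

/-- The (random) small set `S`, consisting of the last `s*` bins. -/
def smallSet (δ sstar : ℕ) (X : V → Ω → ℝ) (ω : Ω) : Set V :=
  {v | δ - sstar < binOf δ (X v ω)}

/-- The (random) big set `B = V ∖ S`. -/
def bigSet (δ sstar : ℕ) (X : V → Ω → ℝ) (ω : Ω) : Set V :=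
  (smallSet δ sstar X ω)ᶜ

/-- The (random) group `S_q`, given a bin-to-group assignment `g`. -/
def groupSet (δ sstar : ℕ) (g : ℕ → ℕ) (X : V → Ω → ℝ) (q : ℕ) (ω : Ω) : Set V :=
  {v | δ - sstar < binOf δ (X v ω) ∧ g (binOf δ (X v ω)) = q}

/-- Number of neighbours of `v` inside a set `U`. -/
def degIn (G : SimpleGraph V) (v : V) (U : Set V) : ℕ :=
  {u | G.Adj v u ∧ u ∈ U}.ncard

/-- A valid assignment of the `s*` bins of `S` into `k'` groups of consecutive bins,
each of size `⌊s*/k'⌋` or `⌈s*/k'⌉`, the first group having size `⌊s*/k'⌋`. -/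
def GoodGrouping (δ sstar k' : ℕ) (g : ℕ → ℕ) : Prop :=
  (∀ i ∈ Finset.Ioc (δ - sstar) δ, g i ∈ Finset.Icc 1 k') ∧
  (∀ i ∈ Finset.Ioc (δ - sstar) δ, ∀ j ∈ Finset.Ioc (δ - sstar) δ, i ≤ j → g i ≤ g j) ∧
  (∀ q ∈ Finset.Icc 1 k',
    ((Finset.Ioc (δ - sstar) δ).filter (fun i => g i = q)).card = sstar / k' ∨
    ((Finset.Ioc (δ - sstar) δ).filter (fun i => g i = q)).card = ⌈(sstar : ℚ) / (k' : ℚ)⌉₊) ∧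
  ((Finset.Ioc (δ - sstar) δ).filter (fun i => g i = 1)).card = sstar / k'

/-- `⌈n/δ⌉` as an integer. -/
def ndCeil (n δ : ℕ) : ℤ := ⌈(n : ℚ) / (δ : ℚ)⌉

/-- `⌈⌈n/δ⌉/(3k')⌉ · (j + k')`, the weight used on edges joining `B` to `S_j`. -/
def edgeCross (n δ k' j : ℕ) : ℤ := ⌈(ndCeil n δ : ℚ) / (3 * (k' : ℚ))⌉ * ((j : ℤ) + (k' : ℤ))

/-- The Step-A edge weighting `f₁` (as a symmetric function of ordered pairs;
it takes the value `0` on non-adjacent pairs). -/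
def f1 (G : SimpleGraph V) [DecidableRel G.Adj] (n δ sstar k' a' : ℕ) (g : ℕ → ℕ)
    (X : V → Ω → ℝ) (ω : Ω) (u v : V) : ℤ :=
  if G.Adj u v then
    if binOf δ (X u ω) ≤ δ - sstar ∧ binOf δ (X v ω) ≤ δ - sstar then
      if δ - sstar + 1 < binOf δ (X u ω) + binOf δ (X v ω) then ndCeil n δ + (a' : ℤ) else 1
    else if binOf δ (X u ω) ≤ δ - sstar then edgeCross n δ k' (g (binOf δ (X v ω)))
    else if binOf δ (X v ω) ≤ δ - sstar then edgeCross n δ k' (g (binOf δ (X u ω)))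
    else 0
  else 0

/-- The weighted degree `f̃₁(v)` of a vertex under `f₁`. -/
def tf1 (G : SimpleGraph V) [Fintype V] [DecidableRel G.Adj] (n δ sstar k' a' : ℕ)
    (g : ℕ → ℕ) (X : V → Ω → ℝ) (ω : Ω) (v : V) : ℤ :=
  ∑ u ∈ G.neighborFinset v, f1 G n δ sstar k' a' g X ω u v

/-- `σ_μ(v,i) = E[f̃₁(v) | v ∈ B_i]` for `1 ≤ i ≤ δ - s*`, and `0` otherwise. -/
def sigmaMu (G : SimpleGraph V) [Fintype V] [DecidableRel G.Adj] [MeasureSpace Ω]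
    (n δ sstar k' a' : ℕ) (g : ℕ → ℕ) (X : V → Ω → ℝ) (v : V) (i : ℕ) : ℝ :=
  if 1 ≤ i ∧ i ≤ δ - sstar then
    ∫ ω, (tf1 G n δ sstar k' a' g X ω v : ℝ) ∂((ℙ : Measure Ω)[|{ω | binOf δ (X v ω) = i}])
  else 0

/-- The common length `⌈n/δ⌉ + a' - 1` of the intervals `I_h`. -/
def Ilen (n δ a' : ℕ) : ℝ := (ndCeil n δ : ℝ) + (a' : ℝ) - 1

/-- The interval `I_h`. -/
def IIv (n δ a' : ℕ) (h : ℕ) : Set ℝ :=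
  if h = 0 then Set.Ioo 0 (Ilen n δ a')
  else Set.Ico ((h : ℝ) * Ilen n δ a') (((h : ℝ) + 1) * Ilen n δ a')

/-- `μ_h`: the expected number of vertices `v` with `σ_μ(v, Z(v)) ∈ I_h`. -/
def muH (G : SimpleGraph V) [Fintype V] [DecidableRel G.Adj] [MeasureSpace Ω]
    (n δ sstar k' a' : ℕ) (g : ℕ → ℕ) (X : V → Ω → ℝ) (h : ℕ) : ℝ :=
  ∫ ω, (({v : V | sigmaMu G n δ sstar k' a' g X v (binOf δ (X v ω)) ∈ IIv n δ a' h}).ncard : ℝ)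

/-- `μ_{[h₁,h₂)}`. -/
def muBlock (G : SimpleGraph V) [Fintype V] [DecidableRel G.Adj] [MeasureSpace Ω]
    (n δ sstar k' a' : ℕ) (g : ℕ → ℕ) (X : V → Ω → ℝ) (h₁ h₂ : ℕ) : ℝ :=
  ∑ h ∈ Finset.Ico h₁ h₂, muH G n δ sstar k' a' g X h

/-- The (random) set `V_h`. -/
def Vh (G : SimpleGraph V) [Fintype V] [DecidableRel G.Adj] [MeasureSpace Ω]
    (n δ sstar k' a' : ℕ) (α : ℝ) (g : ℕ → ℕ) (X : V → Ω → ℝ) (ω : Ω) (h : ℕ) : Set V :=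
  {v | sigmaMu G n δ sstar k' a' g X v (binOf δ (X v ω)) ∈ IIv n δ a' h ∧
    |(tf1 G n δ sstar k' a' g X ω v : ℝ) - sigmaMu G n δ sstar k' a' g X v (binOf δ (X v ω))| ≤
      (G.degree v : ℝ) ^ ((1 : ℝ) / 2 + α) * Ilen n δ a'}

/-- The (random) set `Y_h` of bad vertices of the first kind. -/
def Yh (G : SimpleGraph V) [Fintype V] [DecidableRel G.Adj] [MeasureSpace Ω]
    (n δ sstar k' a' : ℕ) (α : ℝ) (g : ℕ → ℕ) (X : V → Ω → ℝ) (ω : Ω) (h : ℕ) : Set V :=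
  {v | sigmaMu G n δ sstar k' a' g X v (binOf δ (X v ω)) ∈ IIv n δ a' h ∧
    |(tf1 G n δ sstar k' a' g X ω v : ℝ) - sigmaMu G n δ sstar k' a' g X v (binOf δ (X v ω))| >
      (G.degree v : ℝ) ^ ((1 : ℝ) / 2 + α) * Ilen n δ a'}

/-- `V_{[h₁,h₂)}`. -/
def Vblock (G : SimpleGraph V) [Fintype V] [DecidableRel G.Adj] [MeasureSpace Ω]
    (n δ sstar k' a' : ℕ) (α : ℝ) (g : ℕ → ℕ) (X : V → Ω → ℝ) (ω : Ω) (h₁ h₂ : ℕ) : Set V :=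
  ⋃ h ∈ Finset.Ico h₁ h₂, Vh G n δ sstar k' a' α g X ω h

/-- `Y_{[h₁,h₂)}`. -/
def Yblock (G : SimpleGraph V) [Fintype V] [DecidableRel G.Adj] [MeasureSpace Ω]
    (n δ sstar k' a' : ℕ) (α : ℝ) (g : ℕ → ℕ) (X : V → Ω → ℝ) (ω : Ω) (h₁ h₂ : ℕ) : Set V :=
  ⋃ h ∈ Finset.Ico h₁ h₂, Yh G n δ sstar k' a' α g X ω h

/-- The (random) set `Z_S` of vertices with few neighbours in `S`. -/
def ZS (G : SimpleGraph V) [Fintype V] [DecidableRel G.Adj] (δ sstar : ℕ)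
    (X : V → Ω → ℝ) (ω : Ω) : Set V :=
  {v | (degIn G v (smallSet δ sstar X ω) : ℝ) < (sstar : ℝ) * (G.degree v : ℝ) / (2 * (δ : ℝ))}

/-- The (random) set `Z_{S_q}` of vertices of `S_q` whose degree to `B` is far from expected. -/
def ZSq (G : SimpleGraph V) [Fintype V] [DecidableRel G.Adj] (δ sstar : ℕ) (ε : ℝ)
    (g : ℕ → ℕ) (X : V → Ω → ℝ) (q : ℕ) (ω : Ω) : Set V :=
  {v | v ∈ groupSet δ sstar g X q ω ∧
    |(degIn G v (bigSet δ sstar X ω) : ℝ) - (G.degree v : ℝ) * ((δ : ℝ) - (sstar : ℝ)) / (δ : ℝ)| >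
      (G.degree v : ℝ) ^ ((1 : ℝ) / 2 + ε)}

/-- The set `U_b` of bad vertices (given a choice `ZS'` of the set `Z'_S`). -/
def Ub (G : SimpleGraph V) [Fintype V] [DecidableRel G.Adj] [MeasureSpace Ω]
    (n δ sstar k' a' : ℕ) (ε α : ℝ) (g : ℕ → ℕ) (X : V → Ω → ℝ) (ZS' : Ω → Set V)
    (ω : Ω) : Set V :=
  Yblock G n δ sstar k' a' α g X ω 0 (2 * n) ∪ ZS G δ sstar X ω ∪ ZS' ω ∪
    ⋃ q ∈ Finset.Icc 1 k', ZSq G δ sstar ε g X q ω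

/-- `⌈⌈n/δ⌉/(3k')⌉ · (k' + q)` as a real number. -/
def crossMid (n δ k' q : ℕ) : ℝ := ((⌈(ndCeil n δ : ℚ) / (3 * (k' : ℚ))⌉ : ℤ) : ℝ) * ((k' : ℝ) + (q : ℝ))

/-- The error term `13n/δ^(1+ε) + 4`. -/
def errTerm (n δ : ℕ) (ε : ℝ) : ℝ := 13 * (n : ℝ) / (δ : ℝ) ^ (1 + ε) + 4

/-- The (random) set `L(v)` of vertices "close" to `v`. -/
def Lset (G : SimpleGraph V) [Fintype V] [DecidableRel G.Adj] (n δ sstar k' : ℕ) (ε : ℝ)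
    (g : ℕ → ℕ) (X : V → Ω → ℝ) (ω : Ω) (v : V) : Set V :=
  {u | ∃ p q : ℕ, 1 ≤ p ∧ p ≤ k' ∧ 1 ≤ q ∧ q ≤ k' ∧
    v ∈ groupSet δ sstar g X q ω ∧ u ∈ groupSet δ sstar g X p ω ∧
    (crossMid n δ k' q + errTerm n δ ε) * (G.degree v : ℝ) >
      (crossMid n δ k' p - errTerm n δ ε) * (G.degree u : ℝ) ∧
    (crossMid n δ k' q - errTerm n δ ε) * (G.degree v : ℝ) <
      (crossMid n δ k' p + errTerm n δ ε) * (G.degree u : ℝ)}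


/-- Core inequality: for `k ≥ 2`, six times the error is below the step `A`. -/
lemma err_bound (n δ k : ℕ) (ε : ℝ) (hδ : 0 < δ) (hk2 : 2 ≤ k)
    (hk : k = min ⌈(n : ℝ) / (400 * (δ : ℝ))⌉₊ ⌈(δ : ℝ) ^ ε / 2000⌉₊) :
    6 * errTerm n δ ε < ((⌈(ndCeil n δ : ℚ) / (3 * (k : ℚ))⌉ : ℤ) : ℝ) := by
  set A : ℤ := ⌈(ndCeil n δ : ℚ) / (3 * (k : ℚ))⌉ with hA
  have hδr : (0 : ℝ) < δ := by exact_mod_cast hδ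
  have hkr : (2 : ℝ) ≤ k := by exact_mod_cast hk2
  have hkq : (2 : ℚ) ≤ k := by exact_mod_cast hk2
  have hD : (0 : ℝ) < (δ : ℝ) ^ ε := Real.rpow_pos_of_pos hδr ε
  have e1 : (n : ℝ) / (400 * (δ : ℝ)) = (n : ℝ) / δ / 400 := by field_simp
  have hE : errTerm n δ ε = 13 * (((n : ℝ) / δ) / (δ : ℝ) ^ ε) + 4 := by
    unfold errTerm
    rw [Real.rpow_add hδr, Real.rpow_one]
    field_simp
  have hx0 : (0 : ℝ) ≤ (n : ℝ) / δ := by positivity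
  have k1 : (k : ℝ) < (n : ℝ) / δ / 400 + 1 := by
    have h1 : k ≤ ⌈(n : ℝ) / (400 * (δ : ℝ))⌉₊ := hk ▸ min_le_left _ _
    have h2 := Nat.ceil_lt_add_one (show (0 : ℝ) ≤ (n : ℝ) / (400 * (δ : ℝ)) by positivity)
    have h3 : (k : ℝ) ≤ (⌈(n : ℝ) / (400 * (δ : ℝ))⌉₊ : ℝ) := by exact_mod_cast h1
    rw [← e1]; linarith
  have k2 : (k : ℝ) < (δ : ℝ) ^ ε / 2000 + 1 := by
    have h1 : k ≤ ⌈(δ : ℝ) ^ ε / 2000⌉₊ := hk ▸ min_le_right _ _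
    have h2 := Nat.ceil_lt_add_one (show (0 : ℝ) ≤ (δ : ℝ) ^ ε / 2000 by positivity)
    have h3 : (k : ℝ) ≤ (⌈(δ : ℝ) ^ ε / 2000⌉₊ : ℝ) := by exact_mod_cast h1
    linarith
  have hAx : (n : ℝ) / δ ≤ 3 * k * (A : ℝ) := by
    have h1 : (n : ℚ) / δ ≤ (ndCeil n δ : ℚ) := Int.le_ceil _
    have h2 : (ndCeil n δ : ℚ) / (3 * (k : ℚ)) ≤ (A : ℚ) := Int.le_ceil _
    rw [div_le_iff₀ (by positivity)] at h2
    have h3 : (n : ℚ) / δ ≤ 3 * k * (A : ℚ) := by linarith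
    have h4 : (((n : ℚ) / δ : ℚ) : ℝ) ≤ ((3 * k * (A : ℚ) : ℚ) : ℝ) := Rat.cast_le.mpr h3
    push_cast at h4
    exact h4
  rw [hE]
  generalize (n : ℝ) / δ = x at *
  generalize (δ : ℝ) ^ ε = D at *
  generalize (A : ℝ) = a at *
  have d1 : 1000 * (k : ℝ) ≤ D := by linarith
  have d2 : 200 * (k : ℝ) ≤ x := by linarith
  have a1 : 200 ≤ 3 * a := by
    by_contra hc
    push Not at hc
    nlinarith
  have a2 : x / D ≤ 3 * a / 1000 := by
    rw [div_le_iff₀ hD]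
    nlinarith
  linarith

/-- Ordered version: two close groups `p₁ < p₂` are impossible. -/
lemma no_two (A k q p₁ p₂ E dv du : ℝ) (hE0 : 0 < E) (hE : 6 * E < A) (hk : 0 < k)
    (hq : 0 ≤ q) (hp₁ : p₁ ≤ k) (hp₂ : p₂ ≤ k) (h12 : p₁ + 1 ≤ p₂) (hp0 : 1 ≤ p₁) (hk1 : 1 ≤ k)
    (hdu : 0 < du)
    (h1 : (A * (k + q) + E) * dv > (A * (k + p₂) - E) * du)
    (h2 : (A * (k + q) - E) * dv < (A * (k + p₁) + E) * du) : False := by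
  have hA : 0 < A := by linarith
  have hm : A * k ≤ A * (k + q) := by gcongr; linarith
  have hm1 : A * (k + p₁) ≤ 2 * (A * k) := by nlinarith
  have hm2 : A * (k + p₂) ≤ 2 * (A * k) := by nlinarith
  have hd : A * (k + p₁) + A ≤ A * (k + p₂) := by nlinarith
  have hAk : A ≤ A * k := by nlinarith
  generalize A * (k + q) = m at *
  generalize A * (k + p₁) = m1 at *
  generalize A * (k + p₂) = m2 at *
  have hmE : 0 < m - E := by linarith
  have hmE' : 0 < m + E := by linarith
  have g1 := mul_lt_mul_of_pos_left h1 hmE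
  have g2 := mul_lt_mul_of_pos_left h2 hmE'
  have g3 : ((m - E) * (m2 - E)) * du < ((m + E) * (m1 + E)) * du := by linarith
  have g4 := lt_of_mul_lt_mul_right g3 hdu.le
  have g5 : m * A ≤ m * (m2 - m1) := by
    apply mul_le_mul_of_nonneg_left <;> linarith
  have g6 : E * (2 * m + m1 + m2) ≤ E * (6 * m) := by
    apply mul_le_mul_of_nonneg_left <;> linarith
  have g7 : m * (6 * E) < m * A := by
    apply mul_lt_mul_of_pos_left <;> linarith
  linarith

/-- For `δ ≥ c` and `n ≥ c·δ` (with `c = c(ε)`), given `1 ≤ q ≤ k'` and degree values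
`d_v, d_u ≥ δ`, there is at most one `1 ≤ p ≤ k'` for which the pair of "closeness"
inequalities holds. -/
theorem at_most_one_close_group
    (ε : ℝ) (hε : ε ∈ Set.Ioo (0 : ℝ) 0.25) :
    ∃ c : ℝ, ∀ n δ : ℕ, 0 < n → 0 < δ → c ≤ (δ : ℝ) → c * (δ : ℝ) ≤ (n : ℝ) →
      ∀ k' : ℕ, k' = min ⌈(n : ℝ) / (400 * (δ : ℝ))⌉₊ ⌈(δ : ℝ) ^ ε / 2000⌉₊ →
      ∀ q : ℕ, 1 ≤ q → q ≤ k' →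
      ∀ dv du : ℤ, (δ : ℤ) ≤ dv → (δ : ℤ) ≤ du →
      ∀ p₁ p₂ : ℕ, 1 ≤ p₁ → p₁ ≤ k' → 1 ≤ p₂ → p₂ ≤ k' →
      ((crossMid n δ k' q + errTerm n δ ε) * (dv : ℝ) >
          (crossMid n δ k' p₁ - errTerm n δ ε) * (du : ℝ) ∧
        (crossMid n δ k' q - errTerm n δ ε) * (dv : ℝ) <
          (crossMid n δ k' p₁ + errTerm n δ ε) * (du : ℝ)) →
      ((crossMid n δ k' q + errTerm n δ ε) * (dv : ℝ) >
          (crossMid n δ k' p₂ - errTerm n δ ε) * (du : ℝ) ∧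
        (crossMid n δ k' q - errTerm n δ ε) * (dv : ℝ) <
          (crossMid n δ k' p₂ + errTerm n δ ε) * (du : ℝ)) →
      p₁ = p₂ := by
  refine ⟨0, ?_⟩
  intro n δ _ hδ _ _ k hk q hq hqk dv du _ hdu p₁ p₂ hp₁ hp₁k hp₂ hp₂k h1 h2
  by_contra hne
  have hk2 : 2 ≤ k := by omega
  have hE := err_bound n δ k ε hδ hk2 hk
  have hE0 : 0 < errTerm n δ ε := by unfold errTerm; positivity
  have hdu0 : (0 : ℝ) < du := by
    have : (0 : ℤ) < du := by omega
    exact_mod_cast this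
  have hkr : (1 : ℝ) ≤ k := by exact_mod_cast (by omega : 1 ≤ k)
  have hqr : (0 : ℝ) ≤ q := by positivity
  have a1 : (1 : ℝ) ≤ p₁ := by exact_mod_cast hp₁
  have a2 : (1 : ℝ) ≤ p₂ := by exact_mod_cast hp₂
  have b1 : (p₁ : ℝ) ≤ k := by exact_mod_cast hp₁k
  have b2 : (p₂ : ℝ) ≤ k := by exact_mod_cast hp₂k
  unfold crossMid at h1 h2
  rcases Nat.lt_or_gt_of_ne hne with h | h
  · exact no_two _ _ _ _ _ _ _ _ hE0 hE (by linarith) hqr b1 b2 (by exact_mod_cast h) a1 hkr hdu0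
      h2.1 h1.2
  · exact no_two _ _ _ _ _ _ _ _ hE0 hE (by linarith) hqr b2 b1 (by exact_mod_cast h) a2 hkr hdu0
      h1.1 h2.2

end FL
end
end
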